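/- arXiv:1704.07630 — 5 statements merged into one kernel-verified Lean document; each statement's English description precedes it below -/
import Mathlib

section
/- For every (m,n)-Dyck path π, |i(π)| + |o(π)| = (m−1)(n−1)/2. -/
/-- An `(m,n)`-Dyck path is encoded by the weakly increasing sequence `y 1 ≤ … ≤ y m = n`
of heights of its east steps (with the convention `y 0 = 0`), subject to `m * y c ≥ n * c`.
The north steps of the path are the pairs `(c, j)` with `0 ≤ c < m` and
`y c ≤ j < y (c+1)`, representing the unit north step from `(c, j)` to `(c, j+1)`. -/
def northSteps (m n : ℕ) (y : ℕ → ℕ) : Finset (ℕ × ℕ) :=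
  (Finset.range m ×ˢ Finset.range n).filter fun s => y s.1 ≤ s.2 ∧ s.2 < y (s.1 + 1)

/-- The east steps of the path are indexed by `c` with `1 ≤ c ≤ m`; the east step `c`
goes from `(c-1, y c)` to `(c, y c)`. -/
def eastSteps (m : ℕ) : Finset ℕ := Finset.Icc 1 m

/-- `o(π)`: pairs `(s₁, s₂)` of an east step `s₁` and a north step `s₂` of the path
with `s₁` occurring earlier than (to the left of) `s₂` along the path. -/
def oSet (m n : ℕ) (y : ℕ → ℕ) : Finset (ℕ × ℕ × ℕ) :=
  (eastSteps m ×ˢ northSteps m n y).filter fun p => p.1 ≤ p.2.1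

/-- `i(π)`: lattice points `(a,b)` strictly between the path and the diagonal:
`1 ≤ a ≤ m-1`, `m·b > n·a` and `b < y a`. -/
def iSet (m n : ℕ) (y : ℕ → ℕ) : Finset (ℕ × ℕ) :=
  (Finset.Icc 1 (m - 1) ×ˢ Finset.range n).filter fun p =>
    n * p.1 < m * p.2 ∧ p.2 < y p.1

/-- `k(p)` for a lattice point `p = (a,b)`: the number of north steps of the path whose
interior is intersected by the line through `p` parallel to the diagonal,
`m·(y−b) = n·(x−a)`.  A north step `(c,j)` is intersected iff
`m·j < m·b + n·(c−a) < m·(j+1)`. -/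
def kNum (m n : ℕ) (y : ℕ → ℕ) (p : ℕ × ℕ) : ℕ :=
  ((northSteps m n y).filter fun s =>
    (m : ℤ) * s.2 < (m : ℤ) * p.2 + (n : ℤ) * ((s.1 : ℤ) - (p.1 : ℤ)) ∧
    (m : ℤ) * p.2 + (n : ℤ) * ((s.1 : ℤ) - (p.1 : ℤ)) < (m : ℤ) * ((s.2 : ℤ) + 1)).card

/-- `h₊(π)`: the number of pairs `(s₁, s₂) ∈ o(π)` such that some line parallel to the
diagonal meets the interiors of both steps.  For the east step `s₁ = c₁` (at height
`y c₁`) and the north step `s₂ = (c₂, j)` this overlap condition reads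
`m·(y c₁) − n·c₁ < m·(j+1) − n·c₂` and `m·j − n·c₂ < m·(y c₁) − n·(c₁−1)`. -/
def hplus (m n : ℕ) (y : ℕ → ℕ) : ℕ :=
  ((oSet m n y).filter fun p =>
    (m : ℤ) * (y p.1 : ℤ) - (n : ℤ) * (p.1 : ℤ)
        < (m : ℤ) * ((p.2.2 : ℤ) + 1) - (n : ℤ) * (p.2.1 : ℤ) ∧
    (m : ℤ) * (p.2.2 : ℤ) - (n : ℤ) * (p.2.1 : ℤ)
        < (m : ℤ) * (y p.1 : ℤ) - (n : ℤ) * ((p.1 : ℤ) - 1)).card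

/-- The inner vertices of the path: lattice points at which an east step is immediately
followed by a north step, i.e. points `(c, y c)` with `1 ≤ c ≤ m−1` and `y c < y (c+1)`. -/
def innerV (m n : ℕ) (y : ℕ → ℕ) : Finset (ℕ × ℕ) :=
  (Finset.range (m + 1) ×ˢ Finset.range (n + 1)).filter fun v =>
    1 ≤ v.1 ∧ v.1 ≤ m - 1 ∧ v.2 = y v.1 ∧ y v.1 < y (v.1 + 1)

/-- The outer vertices of the path: lattice points at which a north step is immediately
followed by an east step, i.e. points `(c, y (c+1))` with `0 ≤ c ≤ m−1` and
`y c < y (c+1)`. -/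
def outerV (m n : ℕ) (y : ℕ → ℕ) : Finset (ℕ × ℕ) :=
  (Finset.range (m + 1) ×ˢ Finset.range (n + 1)).filter fun v =>
    v.1 ≤ m - 1 ∧ v.2 = y (v.1 + 1) ∧ y v.1 < y (v.1 + 1)

/-- `v^*(π)`: the outer vertices of the path excluding the (unique) outer vertex most
distant from the diagonal, i.e. those outer vertices `v` for which some outer vertex `w`
satisfies `m·y(w) − n·x(w) > m·y(v) − n·x(v)`. -/
def vstar (m n : ℕ) (y : ℕ → ℕ) : Finset (ℕ × ℕ) :=
  (outerV m n y).filter fun v => ∃ w ∈ outerV m n y,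
    (m : ℤ) * (v.2 : ℤ) - (n : ℤ) * (v.1 : ℤ) < (m : ℤ) * (w.2 : ℤ) - (n : ℤ) * (w.1 : ℤ)

/-!
In column `a` the points counted by `i(π)` are those strictly above the diagonal and below the
path. An east step `a` precedes a north step starting at height `j` exactly when `y a ≤ j`, and the
path has one north step at each height, so `o(π)` counts the remaining points `(a, j)` strictly
above the diagonal in the open `m × n` rectangle. Since the diagonal carries no lattice point of
this rectangle, the half-turn about its centre shows that half of its points lie above the diagonal.
-/

open Finset

section LatticeRectangle

variable {m n : ℕ}

/-- The lattice points of the open rectangle `(0, m) × (0, n)` strictly above the diagonal from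
`(0, 0)` to `(m, n)`. For coprime `m`, `n`, every `(m, n)`-Dyck path splits them into `i(π)` and a
copy of `o(π)`. -/
def aboveDiagonal (m n : ℕ) : Finset (ℕ × ℕ) :=
  {p ∈ Ioo 0 m ×ˢ Ioo 0 n | n * p.1 < m * p.2}

lemma mul_sub_lt_mul_sub_iff {a b : ℕ} (ha : a ≤ m) (hb : b ≤ n) :
    n * (m - a) < m * (n - b) ↔ m * b < n * a := by
  have hna : n * a ≤ m * n := mul_comm n m ▸ Nat.mul_le_mul_left n ha
  have hmb : m * b ≤ m * n := Nat.mul_le_mul_left m hb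
  rw [Nat.mul_sub, Nat.mul_sub, mul_comm n m, tsub_lt_tsub_iff_left_of_le_of_le hna hmb]

lemma card_filter_below_diagonal (m n : ℕ) :
    #{p ∈ Ioo 0 m ×ˢ Ioo 0 n | m * p.2 < n * p.1} = #(aboveDiagonal m n) := by
  let halfTurn : ℕ × ℕ → ℕ × ℕ := fun p ↦ (m - p.1, n - p.2)
  have involutive {p : ℕ × ℕ} (hp : p ∈ Ioo 0 m ×ˢ Ioo 0 n) : halfTurn (halfTurn p) = p := by
    simp only [mem_product, mem_Ioo] at hp
    exact Prod.ext (Nat.sub_sub_self hp.1.2.le) (Nat.sub_sub_self hp.2.2.le)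
  refine card_nbij' halfTurn halfTurn ?_ ?_ (fun p hp ↦ involutive (mem_filter.1 hp).1)
    fun p hp ↦ involutive (mem_filter.1 hp).1
  all_goals
    rintro ⟨a, b⟩ h
    simp only [halfTurn, aboveDiagonal, coe_filter, mem_product, mem_Ioo, Set.mem_ofPred_eq] at h ⊢
    obtain ⟨⟨⟨ha, ham⟩, hb, hbn⟩, hab⟩ := h
    refine ⟨by omega, ?_⟩
  · exact (mul_sub_lt_mul_sub_iff ham.le hbn.le).2 hab
  · exact (mul_sub_lt_mul_sub_iff hbn.le ham.le).2 hab

lemma mul_ne_mul_of_coprime {a : ℕ} (hcop : m.Coprime n) (ha : 0 < a) (ham : a < m) (b : ℕ) :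
    n * a ≠ m * b := fun h ↦
  Nat.not_dvd_of_pos_of_lt ha ham (hcop.dvd_of_dvd_mul_left ⟨b, h⟩)

lemma two_mul_card_aboveDiagonal (hcop : m.Coprime n) :
    2 * #(aboveDiagonal m n) = (m - 1) * (n - 1) := by
  have not_above_iff : ∀ p ∈ Ioo 0 m ×ˢ Ioo 0 n, ¬ n * p.1 < m * p.2 ↔ m * p.2 < n * p.1 := by
    intro p hp
    simp only [mem_product, mem_Ioo] at hp
    exact not_lt.trans (mul_ne_mul_of_coprime hcop hp.1.1 hp.1.2 p.2).symm.le_iff_lt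
  calc 2 * #(aboveDiagonal m n)
      = #(aboveDiagonal m n) + #{p ∈ Ioo 0 m ×ˢ Ioo 0 n | ¬ n * p.1 < m * p.2} := by
        rw [filter_congr not_above_iff, card_filter_below_diagonal, two_mul]
    _ = #(Ioo 0 m ×ˢ Ioo 0 n) := card_filter_add_card_filter_not _
    _ = (m - 1) * (n - 1) := by simp only [card_product, Nat.card_Ioo, Nat.sub_zero]

end LatticeRectangle

lemma exists_le_and_lt_succ {α : Type*} [LinearOrder α] {y : ℕ → α} {m : ℕ} {j : α}
    (h0 : y 0 ≤ j) (hm : j < y m) : ∃ c < m, y c ≤ j ∧ j < y (c + 1) := by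
  by_contra! hstep
  have hle : ∀ c ≤ m, y c ≤ j := by
    intro c
    induction c with
    | zero => exact fun _ ↦ h0
    | succ c ih => exact fun hc ↦ hstep c hc (ih (Nat.le_of_succ_le hc))
  exact (hle m le_rfl).not_gt hm

section Path

variable {m n : ℕ} {y : ℕ → ℕ}

lemma iSet_eq_filter_aboveDiagonal (m n : ℕ) (y : ℕ → ℕ) :
    iSet m n y = {p ∈ aboveDiagonal m n | p.2 < y p.1} := by
  ext ⟨a, b⟩
  have pos_of_above (h : n * a < m * b) : 0 < b := Nat.pos_of_mul_pos_left (Nat.zero_lt_of_lt h)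
  simp only [iSet, aboveDiagonal, mem_filter, mem_product, mem_Icc, mem_Ioo, mem_range]
  grind

lemma mem_northSteps {s : ℕ × ℕ} :
    s ∈ northSteps m n y ↔ (s.1 < m ∧ s.2 < n) ∧ y s.1 ≤ s.2 ∧ s.2 < y (s.1 + 1) := by
  simp only [northSteps, mem_filter, mem_product, mem_range]

lemma le_fst_iff_of_mem_northSteps (hmono : MonotoneOn y (Set.Iic m)) {a : ℕ} (ha : a ≤ m)
    {s : ℕ × ℕ} (hs : s ∈ northSteps m n y) : a ≤ s.1 ↔ y a ≤ s.2 := by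
  obtain ⟨⟨hsm, -⟩, hle, hlt⟩ := mem_northSteps.1 hs
  constructor
  · exact fun has ↦ (hmono ha hsm.le has).trans hle
  · contrapose!
    exact fun hsa ↦ hlt.trans_le (hmono hsm ha hsa)

lemma injOn_snd_northSteps (hmono : MonotoneOn y (Set.Iic m)) :
    Set.InjOn Prod.snd (northSteps m n y : Set (ℕ × ℕ)) := by
  have fst_le {s t : ℕ × ℕ} (hs : s ∈ northSteps m n y) (ht : t ∈ northSteps m n y)
      (hst : s.2 = t.2) : s.1 ≤ t.1 := by
    obtain ⟨⟨hsm, -⟩, hle, -⟩ := mem_northSteps.1 hs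
    exact (le_fst_iff_of_mem_northSteps hmono hsm.le ht).2 (hle.trans_eq hst)
  exact fun s hs t ht hst ↦ Prod.ext ((fst_le hs ht hst).antisymm (fst_le ht hs hst.symm)) hst

lemma surjOn_snd_northSteps (hy0 : y 0 = 0) (hym : n ≤ y m) :
    Set.SurjOn Prod.snd (northSteps m n y : Set (ℕ × ℕ)) (range n) := by
  intro j hj
  have hjn : j < n := mem_range.1 hj
  obtain ⟨c, hcm, hle, hlt⟩ := exists_le_and_lt_succ (hy0.trans_le j.zero_le) (hjn.trans_le hym)
  exact ⟨(c, j), mem_northSteps.2 ⟨⟨hcm, hjn⟩, hle, hlt⟩, rfl⟩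

lemma bijOn_snd_northSteps (hmono : MonotoneOn y (Set.Iic m)) (hy0 : y 0 = 0) (hym : n ≤ y m) :
    Set.BijOn Prod.snd (northSteps m n y : Set (ℕ × ℕ)) (range n) :=
  ⟨fun _ hs ↦ mem_range.2 (mem_northSteps.1 hs).1.2, injOn_snd_northSteps hmono,
    surjOn_snd_northSteps hy0 hym⟩

lemma card_oSet (hmono : MonotoneOn y (Set.Iic m)) (hy0 : y 0 = 0) (hym : n ≤ y m) :
    #(oSet m n y) = #{p ∈ eastSteps m ×ˢ range n | y p.1 ≤ p.2} := by
  have hprod : Set.BijOn (fun p : ℕ × ℕ × ℕ ↦ (p.1, p.2.2))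
      (eastSteps m ×ˢ northSteps m n y : Finset _) (eastSteps m ×ˢ range n : Finset _) := by
    simpa only [coe_product, id_eq] using
      (Set.bijOn_id _).prodMap (bijOn_snd_northSteps hmono hy0 hym)
  have hoSet : oSet m n y = {p ∈ eastSteps m ×ˢ northSteps m n y | y p.1 ≤ p.2.2} := by
    refine filter_congr fun p hp ↦ ?_
    obtain ⟨heast, hnorth⟩ := mem_product.1 hp
    exact le_fst_iff_of_mem_northSteps hmono (mem_Icc.1 heast).2 hnorth
  rw [hoSet]
  refine Set.BijOn.finsetCard_eq (fun p ↦ (p.1, p.2.2)) ?_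
  convert! hprod.subset_right (coe_subset.2 (filter_subset (fun p ↦ y p.1 ≤ p.2) _)) using 1
  ext p
  simp only [coe_filter, Set.mem_inter_iff, Set.mem_preimage, Set.mem_ofPred_eq, mem_coe]
  exact and_congr_right fun hp ↦ (and_iff_right (hprod.mapsTo hp)).symm

lemma filter_le_eq_filter_aboveDiagonal (hcop : m.Coprime n) (hym : n ≤ y m)
    (habove : ∀ c, 1 ≤ c → c ≤ m → n * c ≤ m * y c) :
    {p ∈ eastSteps m ×ˢ range n | y p.1 ≤ p.2} = {p ∈ aboveDiagonal m n | y p.1 ≤ p.2} := by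
  ext ⟨a, b⟩
  simp only [eastSteps, aboveDiagonal, mem_filter, mem_product, mem_Icc, mem_Ioo, mem_range]
  constructor
  · rintro ⟨⟨⟨ha, ham⟩, hbn⟩, hab⟩
    have ha_lt : a < m := ham.lt_of_ne (by rintro rfl; omega)
    have hdiag : n * a < m * b :=
      ((habove a ha ham).trans (Nat.mul_le_mul_left m hab)).lt_of_ne
        (mul_ne_mul_of_coprime hcop ha ha_lt b)
    have hb : 0 < b := Nat.pos_of_mul_pos_left (Nat.zero_lt_of_lt hdiag)
    exact ⟨⟨⟨⟨ha, ha_lt⟩, hb, hbn⟩, hdiag⟩, hab⟩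
  · rintro ⟨⟨⟨⟨ha, ham⟩, -, hbn⟩, -⟩, hab⟩
    exact ⟨⟨⟨ha, ham.le⟩, hbn⟩, hab⟩

end Path

/-- For every `(m,n)`-Dyck path `π` (with `m`, `n` coprime positive
integers), `|i(π)| + |o(π)| = (m−1)(n−1)/2`. -/
theorem iSet_card_add_oSet_card (m n : ℕ) (hm : 0 < m) (hn : 0 < n)
    (hcop : Nat.Coprime m n) (y : ℕ → ℕ) (hy0 : y 0 = 0)
    (hmono : ∀ c < m, y c ≤ y (c + 1)) (hym : y m = n)
    (habove : ∀ c, 1 ≤ c → c ≤ m → n * c ≤ m * y c) :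
    (iSet m n y).card + (oSet m n y).card = (m - 1) * (n - 1) / 2 := by
  have hmonoOn : MonotoneOn y (Set.Iic m) :=
    monotoneOn_of_le_add_one Set.ordConnected_Iic fun c _ _ hc ↦ hmono c hc
  have ho : #(oSet m n y) = #{p ∈ aboveDiagonal m n | ¬ p.2 < y p.1} := by
    simp only [not_lt]
    rw [card_oSet hmonoOn hy0 hym.ge, filter_le_eq_filter_aboveDiagonal hcop hym.ge habove]
  have hsum : #(iSet m n y) + #(oSet m n y) = #(aboveDiagonal m n) := by
    rw [iSet_eq_filter_aboveDiagonal, ho, card_filter_add_card_filter_not]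
  rw [hsum, ← two_mul_card_aboveDiagonal hcop, Nat.mul_div_cancel_left _ two_pos]
end

section
/- For every (m,n)-Dyck path π, |o(π)| − h₊(π) = Σ_{p ∈ i(π)} (k(p) − 1). -/
/-!
Measure the position of a lattice point by its level `m·b − n·a`, which is constant along lines
parallel to the diagonal. For `p ∈ i(π)` the path starts at level `0`, not above that of `p`, and
passes above `p`, so to the left of `p` it crosses the level of `p` once more upwards (by north
steps) than downwards (by east steps). Hence `k(p) − 1` counts the east steps crossed to the left
of `p` together with the north steps crossed to the right of `p`. On the other side,
`|o(π)| − h₊(π)` counts the pairs `(s₁, s₂) ∈ o(π)` whose level ranges are disjoint. If the range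
of `s₂` is the lower one, then it contains the level of exactly one lattice point below the right
end of `s₁`; if it is the upper one, then the range of `s₁` contains the level of exactly one
lattice point in the row of the lower end of `s₂`. These points are the `p ∈ i(π)` on the
other side of the identity.

The level ranges of steps are taken half-open, so that crossings telescope even when the line
meets lattice points of the path; coprimality makes the difference invisible to `k` and `i(π)`.
-/

section RationalDyckPath

variable {m n : ℕ} {y : ℕ → ℕ}

/-- The level of the lattice point `(a, b)`: up to a positive factor, its signed distance from the
diagonal of the `m × n` rectangle, positive above the diagonal. -/
def diagLevel (m n : ℕ) (a b : ℤ) : ℤ := m * b - n * a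

theorem diagLevel_add_one_right (a b : ℤ) : diagLevel m n a (b + 1) = diagLevel m n a b + m := by
  unfold diagLevel; ring

theorem diagLevel_add_one_left (a b : ℤ) : diagLevel m n (a + 1) b = diagLevel m n a b - n := by
  unfold diagLevel; ring

theorem diagLevel_corner : diagLevel m n m n = 0 := by
  unfold diagLevel; ring

theorem diagLevel_strictMono_right (hm : 0 < m) (a : ℤ) : StrictMono (diagLevel m n a) :=
  fun _ _ h ↦ sub_lt_sub_right (mul_lt_mul_of_pos_left h (by exact_mod_cast hm)) _

theorem diagLevel_strictAnti_left (hn : 0 < n) (b : ℤ) : StrictAnti (diagLevel m n · b) :=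
  fun _ _ h ↦ sub_lt_sub_left (mul_lt_mul_of_pos_left h (by exact_mod_cast hn)) _

theorem existsUnique_diagLevel_mem_Ico_right (hm : 0 < m) (a L : ℤ) :
    ∃! b, diagLevel m n a b ∈ Set.Ico L (L + m) := by
  have hm' : (0 : ℤ) < m := by exact_mod_cast hm
  convert existsUnique_add_zsmul_mem_Ico hm' (-(n * a)) L using 3
  rw [diagLevel, smul_eq_mul]
  ring

theorem existsUnique_diagLevel_mem_Ico_left (hn : 0 < n) (b L : ℤ) :
    ∃! a, diagLevel m n a b ∈ Set.Ico L (L + n) := by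
  have hn' : (0 : ℤ) < n := by exact_mod_cast hn
  convert existsUnique_sub_zsmul_mem_Ico hn' (m * b) L using 3
  rw [diagLevel, smul_eq_mul, mul_comm (n : ℤ)]

theorem eq_of_diagLevel_eq (hcop : Nat.Coprime m n) {a b a' b' : ℤ}
    (h : diagLevel m n a b = diagLevel m n a' b') (ha : |a - a'| < m) : a = a' := by
  have hdvd : (m : ℤ) ∣ n * (a - a') := ⟨b - b', by unfold diagLevel at h; linarith⟩
  exact sub_eq_zero.mp <| Int.eq_zero_of_abs_lt_dvd
    ((Nat.isCoprime_iff_coprime.mpr hcop).dvd_of_dvd_mul_left hdvd) ha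

theorem diagLevel_pos_of_nonneg (hcop : Nat.Coprime m n) {a b : ℤ} (ha : 0 < a) (ham : a < m)
    (h : 0 ≤ diagLevel m n a b) : 0 < diagLevel m n a b := by
  refine h.lt_of_ne fun h0 ↦ ha.ne' ?_
  exact eq_of_diagLevel_eq (b' := 0) hcop (by rw [← h0]; simp [diagLevel])
    (by rwa [sub_zero, abs_of_pos ha])

theorem height_le (hy : MonotoneOn y (Set.Iic m)) (hym : y m = n) {c : ℕ} (hc : c ≤ m) :
    y c ≤ n :=
  hym ▸ hy (Set.mem_Iic.mpr hc) (Set.mem_Iic.mpr le_rfl) hc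

theorem mk_mem_northSteps_iff (hy : MonotoneOn y (Set.Iic m)) (hym : y m = n) {c j : ℕ} :
    (c, j) ∈ northSteps m n y ↔ c < m ∧ y c ≤ j ∧ j < y (c + 1) := by
  simp only [northSteps, Finset.mem_filter, Finset.mem_product, Finset.mem_range, and_assoc]
  refine and_congr_right fun hc ↦ and_iff_right_of_imp fun h ↦ ?_
  exact h.2.trans_le (height_le hy hym hc)

theorem northSteps_injOn_snd (hy : MonotoneOn y (Set.Iic m)) (hym : y m = n) :
    Set.InjOn Prod.snd (northSteps m n y : Set (ℕ × ℕ)) := by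
  have not_col_lt : ∀ {c c' j : ℕ}, (c, j) ∈ northSteps m n y → (c', j) ∈ northSteps m n y →
      ¬ c < c' := by
    intro c c' j h h' hlt
    rw [mk_mem_northSteps_iff hy hym] at h h'
    exact (h.2.2.trans_le (hy (Set.mem_Iic.mpr h.1) (Set.mem_Iic.mpr h'.1.le) hlt)).not_ge h'.2.1
  rintro ⟨c, j⟩ h ⟨c', j'⟩ h' rfl
  exact Prod.ext (le_antisymm (not_lt.mp (not_col_lt h' h)) (not_lt.mp (not_col_lt h h'))) rfl

theorem exists_northStep_of_lt (hy : MonotoneOn y (Set.Iic m)) (hy0 : y 0 = 0) (hym : y m = n)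
    {a b : ℕ} (ha : a ≤ m) (hb : b < y a) : ∃ c < a, (c, b) ∈ northSteps m n y := by
  induction a with
  | zero => omega
  | succ a ih =>
    rcases lt_or_ge b (y a) with h | h
    · obtain ⟨c, hc, hmem⟩ := ih (by omega) h
      exact ⟨c, by omega, hmem⟩
    · exact ⟨a, by omega, (mk_mem_northSteps_iff hy hym).mpr ⟨ha, h, hb⟩⟩

theorem mk_mem_iSet_iff {a b : ℕ} :
    (a, b) ∈ iSet m n y ↔ (0 < a ∧ a < m) ∧ b < n ∧ 0 < diagLevel m n a b ∧ b < y a := by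
  have hcol : 1 ≤ a ∧ a ≤ m - 1 ↔ 0 < a ∧ a < m := by omega
  have hlevel : n * a < m * b ↔ 0 < diagLevel m n a b := by
    rw [diagLevel, sub_pos]; norm_cast
  simp only [iSet, Finset.mem_filter, Finset.mem_product, Finset.mem_Icc, Finset.mem_range, hcol,
    hlevel, and_assoc]

theorem mk_mem_iSet_of_diagLevel_nonneg (hcop : Nat.Coprime m n) (hy : MonotoneOn y (Set.Iic m))
    (hym : y m = n) {a b : ℕ} (ha : 0 < a) (ham : a < m) (hnonneg : 0 ≤ diagLevel m n a b)
    (hb : b < y a) : (a, b) ∈ iSet m n y :=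
  mk_mem_iSet_iff.mpr ⟨⟨ha, ham⟩, hb.trans_le (height_le hy hym ham.le),
    diagLevel_pos_of_nonneg hcop (by exact_mod_cast ha) (by exact_mod_cast ham) hnonneg, hb⟩

theorem mk_mem_oSet_iff {e : ℕ} {s : ℕ × ℕ} :
    (e, s) ∈ oSet m n y ↔ (0 < e ∧ e ≤ m) ∧ s ∈ northSteps m n y ∧ e ≤ s.1 := by
  simp only [oSet, eastSteps, Finset.mem_filter, Finset.mem_product, Finset.mem_Icc, and_assoc,
    Nat.succ_le_iff]

theorem diagLevel_northStep_nonneg (habove : ∀ c ≤ m, n * c ≤ m * y c) {s : ℕ × ℕ}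
    (hs : s ∈ northSteps m n y) : 0 ≤ diagLevel m n s.1 s.2 := by
  simp only [northSteps, Finset.mem_filter, Finset.mem_product, Finset.mem_range] at hs
  rw [diagLevel, sub_nonneg]
  exact_mod_cast (habove s.1 hs.1.1.le).trans (Nat.mul_le_mul_left m hs.2.1)

/-- The north steps of the path whose level range, including the lower end, contains `L`. -/
def northCrossings (m n : ℕ) (y : ℕ → ℕ) (L : ℤ) : Finset (ℕ × ℕ) :=
  {s ∈ northSteps m n y | diagLevel m n s.1 s.2 ≤ L ∧ L < diagLevel m n s.1 s.2 + m}

/-- The east steps of the path whose level range, including the lower (right) end, contains `L`. -/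
def eastCrossings (m n : ℕ) (y : ℕ → ℕ) (L : ℤ) : Finset ℕ :=
  {e ∈ eastSteps m | diagLevel m n e (y e) ≤ L ∧ L < diagLevel m n e (y e) + n}

theorem ite_lt_add_sub_ite_lt {x d : ℤ} (hd : 0 ≤ d) (L : ℤ) :
    (if L < x + d then 1 else 0 : ℤ) - (if L < x then 1 else 0) =
      if x ≤ L ∧ L < x + d then 1 else 0 := by
  split_ifs <;> omega

theorem card_northCrossings_left (hy : MonotoneOn y (Set.Iic m)) (hym : y m = n) {t : ℕ}
    (ht : t ≤ m) (L : ℤ) :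
    ({s ∈ northCrossings m n y L | s.1 < t}.card : ℤ) =
      ∑ c ∈ Finset.range t, ((if L < diagLevel m n c (y (c + 1)) then 1 else 0) -
        (if L < diagLevel m n c (y c) then 1 else 0)) := by
  have hcolumns : ∀ s : ℕ × ℕ, s ∈ {s ∈ northSteps m n y | s.1 < t} ↔
      s.1 ∈ Finset.range t ∧ s.2 ∈ Finset.Ico (y s.1) (y (s.1 + 1)) := by
    rintro ⟨c, j⟩
    simp only [Finset.mem_filter, mk_mem_northSteps_iff hy hym, Finset.mem_range, Finset.mem_Ico]
    constructor
    · rintro ⟨⟨-, h⟩, hc⟩; exact ⟨hc, h⟩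
    · rintro ⟨hc, h⟩; exact ⟨⟨hc.trans_le ht, h⟩, hc⟩
  rw [northCrossings, Finset.filter_comm, Finset.card_filter, Nat.cast_sum,
    Finset.sum_finset_product _ (Finset.range t) (fun c ↦ Finset.Ico (y c) (y (c + 1))) hcolumns]
  refine Finset.sum_congr rfl fun c hc ↦ ?_
  have hcm : c + 1 ≤ m := by rw [Finset.mem_range] at hc; omega
  rw [← Finset.sum_Ico_sub (fun j : ℕ ↦ (if L < diagLevel m n c j then 1 else 0 : ℤ))
    (hy (Set.mem_Iic.mpr (by omega)) (Set.mem_Iic.mpr hcm) c.le_succ)]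
  refine Finset.sum_congr rfl fun j _ ↦ ?_
  push_cast
  rw [diagLevel_add_one_right, ite_lt_add_sub_ite_lt (Nat.cast_nonneg m)]

theorem card_eastCrossings_left {t : ℕ} (ht : t ≤ m) (L : ℤ) :
    ({e ∈ eastCrossings m n y L | e ≤ t}.card : ℤ) =
      ∑ c ∈ Finset.range t, ((if L < diagLevel m n c (y (c + 1)) then 1 else 0) -
        (if L < diagLevel m n (c + 1 : ℕ) (y (c + 1)) then 1 else 0)) := by
  have hsteps : {e ∈ eastSteps m | e ≤ t} = Finset.Ico 1 (t + 1) := by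
    ext e
    simp only [eastSteps, Finset.mem_filter, Finset.mem_Icc, Finset.mem_Ico]
    omega
  rw [eastCrossings, Finset.filter_comm, hsteps, Finset.card_filter, Nat.cast_sum,
    Finset.sum_Ico_eq_sum_range, Nat.add_sub_cancel]
  refine Finset.sum_congr rfl fun c _ ↦ ?_
  have hstart : diagLevel m n c (y (c + 1)) =
      diagLevel m n (c + 1 : ℕ) (y (c + 1)) + n := by
    push_cast
    rw [diagLevel_add_one_left, sub_add_cancel]
  rw [hstart, ite_lt_add_sub_ite_lt (Nat.cast_nonneg n), add_comm 1 c]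
  push_cast
  rfl

theorem card_northCrossings_sub_card_eastCrossings_left (hy : MonotoneOn y (Set.Iic m))
    (hym : y m = n) {t : ℕ} (ht : t ≤ m) (L : ℤ) :
    ({s ∈ northCrossings m n y L | s.1 < t}.card : ℤ) -
        {e ∈ eastCrossings m n y L | e ≤ t}.card =
      (if L < diagLevel m n t (y t) then 1 else 0) -
        (if L < diagLevel m n 0 (y 0) then 1 else 0) := by
  rw [card_northCrossings_left hy hym ht, card_eastCrossings_left ht, ← Finset.sum_sub_distrib]
  simp only [sub_sub_sub_cancel_left]
  exact Finset.sum_range_sub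
    (fun c : ℕ ↦ (if L < diagLevel m n c (y c) then 1 else 0 : ℤ)) t

theorem kNum_eq_card_northCrossings (hcop : Nat.Coprime m n) (hy : MonotoneOn y (Set.Iic m))
    (hym : y m = n) {p : ℕ × ℕ} (hp : p ∈ iSet m n y) :
    kNum m n y p = (northCrossings m n y (diagLevel m n p.1 p.2)).card := by
  obtain ⟨a, b⟩ := p
  obtain ⟨⟨-, ham⟩, -, -, hb⟩ := mk_mem_iSet_iff.mp hp
  rw [kNum, northCrossings]
  congr 1
  refine Finset.filter_congr ?_
  rintro ⟨c, j⟩ hs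
  obtain ⟨hc, hj, -⟩ := (mk_mem_northSteps_iff hy hym).mp hs
  have hne : diagLevel m n c j ≠ diagLevel m n a b := by
    intro h
    obtain rfl : c = a := by
      exact_mod_cast eq_of_diagLevel_eq hcop h (by rw [abs_lt]; omega)
    have : (j : ℤ) = b := (diagLevel_strictMono_right (by omega) _).injective h
    omega
  simp only [← lt_iff_le_and_ne.trans (and_iff_left hne)]
  unfold diagLevel
  constructor <;> rintro ⟨h₁, h₂⟩ <;> constructor <;> linarith

theorem kNum_sub_one (hcop : Nat.Coprime m n) (hy : MonotoneOn y (Set.Iic m)) (hy0 : y 0 = 0)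
    (hym : y m = n) {p : ℕ × ℕ} (hp : p ∈ iSet m n y) :
    (kNum m n y p : ℤ) - 1 =
      {e ∈ eastCrossings m n y (diagLevel m n p.1 p.2) | e ≤ p.1}.card +
        {s ∈ northCrossings m n y (diagLevel m n p.1 p.2) | p.1 ≤ s.1}.card := by
  obtain ⟨⟨-, ham⟩, -, hpos, hb⟩ := mk_mem_iSet_iff.mp hp
  have hstart : ¬ diagLevel m n p.1 p.2 < diagLevel m n 0 (y 0) := by
    simpa [hy0, diagLevel] using hpos.le
  have hend : diagLevel m n p.1 p.2 < diagLevel m n p.1 (y p.1) :=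
    diagLevel_strictMono_right (by omega) _ (by exact_mod_cast hb)
  have hbalance := card_northCrossings_sub_card_eastCrossings_left hy hym ham.le
    (diagLevel m n p.1 p.2)
  rw [if_pos hend, if_neg hstart] at hbalance
  rw [kNum_eq_card_northCrossings hcop hy hym hp,
    ← Finset.card_filter_add_card_filter_not (fun s : ℕ × ℕ ↦ s.1 < p.1)]
  simp only [not_lt]
  push_cast
  linarith

/-- The pairs in `o(π)` in which the level range of the north step lies below that of the east
step, possibly with a common end. -/
def oSetBelow (m n : ℕ) (y : ℕ → ℕ) : Finset (ℕ × ℕ × ℕ) :=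
  {q ∈ oSet m n y | diagLevel m n q.2.1 q.2.2 + m ≤ diagLevel m n q.1 (y q.1)}

/-- The pairs in `o(π)` in which the level range of the north step lies above that of the east
step, possibly with a common end. -/
def oSetAbove (m n : ℕ) (y : ℕ → ℕ) : Finset (ℕ × ℕ × ℕ) :=
  {q ∈ oSet m n y | diagLevel m n q.1 (y q.1) + n ≤ diagLevel m n q.2.1 q.2.2}

theorem card_oSet_eq_hplus_add (hm : 0 < m) :
    (oSet m n y).card = hplus m n y + (oSetAbove m n y).card + (oSetBelow m n y).card := by
  have hplus_eq : hplus m n y = {q ∈ oSet m n y |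
      diagLevel m n q.1 (y q.1) < diagLevel m n q.2.1 q.2.2 + m ∧
        diagLevel m n q.2.1 q.2.2 < diagLevel m n q.1 (y q.1) + n}.card := by
    simp only [hplus, diagLevel, mul_add, mul_sub, mul_one, sub_add_eq_add_sub, sub_sub_eq_add_sub]
  rw [hplus_eq, oSetAbove, oSetBelow]
  simp only [Finset.card_filter, Finset.card_eq_sum_ones (oSet m n y), ← Finset.sum_add_distrib]
  refine Finset.sum_congr rfl fun q _ ↦ ?_
  generalize diagLevel m n q.2.1 q.2.2 = north
  generalize diagLevel m n q.1 (y q.1) = east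
  split_ifs <;> omega

theorem mk_mem_oSetBelow_of_mem_iSet {p s : ℕ × ℕ} (hp : p ∈ iSet m n y)
    (hs : s ∈ northCrossings m n y (diagLevel m n p.1 p.2)) (hps : p.1 ≤ s.1) :
    (p.1, s) ∈ oSetBelow m n y := by
  obtain ⟨⟨hp₀, hpm⟩, -, -, hpy⟩ := mk_mem_iSet_iff.mp hp
  rw [northCrossings, Finset.mem_filter] at hs
  rw [oSetBelow, Finset.mem_filter, mk_mem_oSet_iff]
  refine ⟨⟨⟨hp₀, hpm.le⟩, hs.1, hps⟩, ?_⟩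
  calc diagLevel m n s.1 s.2 + m
      ≤ diagLevel m n p.1 p.2 + m := by gcongr; exact hs.2.1
    _ = diagLevel m n p.1 (p.2 + 1) := (diagLevel_add_one_right _ _).symm
    _ ≤ diagLevel m n p.1 (y p.1) :=
      (diagLevel_strictMono_right (hp₀.trans hpm) _).monotone (by exact_mod_cast hpy)

theorem exists_mem_iSet_of_mem_oSetBelow (hm : 0 < m) (hcop : Nat.Coprime m n)
    (hy : MonotoneOn y (Set.Iic m)) (hym : y m = n) (habove : ∀ c ≤ m, n * c ≤ m * y c)
    {q : ℕ × ℕ × ℕ} (hq : q ∈ oSetBelow m n y) :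
    ∃ b : ℕ, (q.1, b) ∈ iSet m n y ∧ q.2 ∈ northCrossings m n y (diagLevel m n q.1 b) := by
  obtain ⟨a, s⟩ := q
  rw [oSetBelow, Finset.mem_filter, mk_mem_oSet_iff] at hq
  obtain ⟨⟨⟨ha, -⟩, hs, has⟩, hbelow⟩ := hq
  obtain ⟨b, ⟨hsb, hbs⟩, -⟩ :=
    existsUnique_diagLevel_mem_Ico_right (n := n) hm a (diagLevel m n s.1 s.2)
  have hmono := diagLevel_strictMono_right (n := n) hm a
  have hnonneg : 0 ≤ diagLevel m n a b := (diagLevel_northStep_nonneg habove hs).trans hsb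
  have hb : 0 ≤ b := by
    refine hmono.le_iff_le.mp (le_trans ?_ hnonneg)
    simp only [diagLevel, mul_zero, zero_sub, Left.neg_nonpos_iff]
    positivity
  lift b to ℕ using hb
  have hby : (b : ℤ) < y a := hmono.lt_iff_lt.mp (hbs.trans_le hbelow)
  have hsm : s.1 < m := ((mk_mem_northSteps_iff hy hym).mp hs).1
  exact ⟨b, mk_mem_iSet_of_diagLevel_nonneg hcop hy hym ha (has.trans_lt hsm) hnonneg
    (by exact_mod_cast hby),
    Finset.mem_filter.mpr ⟨hs, hsb, hbs⟩⟩

theorem card_oSetBelow (hm : 0 < m) (hcop : Nat.Coprime m n) (hy : MonotoneOn y (Set.Iic m))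
    (hym : y m = n) (habove : ∀ c ≤ m, n * c ≤ m * y c) :
    (oSetBelow m n y).card = ∑ p ∈ iSet m n y,
      {s ∈ northCrossings m n y (diagLevel m n p.1 p.2) | p.1 ≤ s.1}.card := by
  rw [← Finset.card_sigma]
  refine (Finset.card_nbij (fun z ↦ (z.1.1, z.2)) ?_ ?_ ?_).symm
  · rintro ⟨p, s⟩ hz
    obtain ⟨hp, hs⟩ := Finset.mem_sigma.mp hz
    obtain ⟨hs, hps⟩ := Finset.mem_filter.mp hs
    exact mk_mem_oSetBelow_of_mem_iSet hp hs hps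
  · rintro ⟨⟨a, b⟩, s⟩ hz ⟨⟨a', b'⟩, s'⟩ hz' heq
    obtain ⟨rfl, rfl⟩ := Prod.mk.inj heq
    simp only [Finset.mem_coe, Finset.mem_sigma, northCrossings, Finset.mem_filter] at hz hz'
    have hb : (b : ℤ) = b' := (existsUnique_diagLevel_mem_Ico_right hm a _).unique
      hz.2.1.2 hz'.2.1.2
    rw [Nat.cast_injective hb]
  · rintro ⟨a, s⟩ hq
    obtain ⟨b, hb, hs⟩ := exists_mem_iSet_of_mem_oSetBelow hm hcop hy hym habove hq
    have has : a ≤ s.1 := (mk_mem_oSet_iff.mp (Finset.mem_filter.mp hq).1).2.2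
    exact ⟨⟨(a, b), s⟩, Finset.mem_sigma.mpr ⟨hb, Finset.mem_filter.mpr ⟨hs, has⟩⟩, rfl⟩

theorem exists_mem_oSetAbove_of_mem_iSet (hy : MonotoneOn y (Set.Iic m)) (hy0 : y 0 = 0)
    (hym : y m = n) {p : ℕ × ℕ} {e : ℕ}
    (hp : p ∈ iSet m n y) (he : e ∈ eastCrossings m n y (diagLevel m n p.1 p.2)) (hep : e ≤ p.1) :
    ∃ c, (e, c, p.2) ∈ oSetAbove m n y := by
  obtain ⟨x, b⟩ := p
  obtain ⟨⟨hx₀, hxm⟩, hbn, -, hb⟩ := mk_mem_iSet_iff.mp hp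
  rw [eastCrossings, Finset.mem_filter, eastSteps, Finset.mem_Icc] at he
  obtain ⟨⟨he0, hem⟩, hle, -⟩ := he
  have hanti := diagLevel_strictAnti_left (m := m) (b.zero_le.trans_lt hbn) b
  obtain ⟨c, hcx, hc⟩ := exists_northStep_of_lt hy hy0 hym hxm.le hb
  have hbc : b < y (c + 1) := ((mk_mem_northSteps_iff hy hym).mp hc).2.2
  have hye : y e ≤ b := by
    have : diagLevel m n e (y e) ≤ diagLevel m n e b :=
      hle.trans (hanti.antitone (by exact_mod_cast hep))
    exact_mod_cast (diagLevel_strictMono_right (hx₀.trans hxm) _).le_iff_le.mp this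
  have hec : e ≤ c := by
    by_contra! hce
    have := hy (Set.mem_Iic.mpr (by omega)) (Set.mem_Iic.mpr hem) hce
    exact (hbc.trans_le this).not_ge hye
  refine ⟨c, Finset.mem_filter.mpr ⟨mk_mem_oSet_iff.mpr ⟨⟨he0, hem⟩, hc, hec⟩, ?_⟩⟩
  calc diagLevel m n e (y e) + n
      ≤ diagLevel m n x b + n := by gcongr
    _ ≤ diagLevel m n (c + 1) b + n := by
      gcongr; exact hanti.antitone (by exact_mod_cast hcx)
    _ = diagLevel m n c b := by rw [diagLevel_add_one_left, sub_add_cancel]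

theorem exists_mem_iSet_of_mem_oSetAbove (hm : 0 < m) (hn : 0 < n) (hcop : Nat.Coprime m n)
    (hy : MonotoneOn y (Set.Iic m)) (hym : y m = n) (habove : ∀ c ≤ m, n * c ≤ m * y c)
    {q : ℕ × ℕ × ℕ} (hq : q ∈ oSetAbove m n y) :
    ∃ x : ℕ, (x, q.2.2) ∈ iSet m n y ∧
      q.1 ∈ eastCrossings m n y (diagLevel m n x q.2.2) ∧ q.1 ≤ x := by
  obtain ⟨e, c, j⟩ := q
  rw [oSetAbove, Finset.mem_filter, mk_mem_oSet_iff] at hq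
  obtain ⟨⟨⟨he, hem⟩, hs, hec⟩, hlevel⟩ := hq
  obtain ⟨hcm, -, hj⟩ := (mk_mem_northSteps_iff hy hym).mp hs
  have hjn : j < n := hj.trans_le (height_le hy hym hcm)
  obtain ⟨x, ⟨hex, hxe⟩, -⟩ :=
    existsUnique_diagLevel_mem_Ico_left (m := m) hn j (diagLevel m n e (y e))
  have hanti := diagLevel_strictAnti_left (m := m) hn j
  have hcx : (c : ℤ) < x := hanti.lt_iff_gt.mp (hxe.trans_le hlevel)
  lift x to ℕ using (Int.natCast_nonneg c).trans hcx.le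
  have hcx : c < x := by exact_mod_cast hcx
  have hnonneg : 0 ≤ diagLevel m n x j := by
    refine le_trans ?_ hex
    rw [diagLevel, sub_nonneg]
    exact_mod_cast habove e hem
  have hxm : (x : ℤ) < m := by
    refine hanti.lt_iff_gt.mp (lt_of_lt_of_le ?_ hnonneg)
    rw [← diagLevel_corner (m := m) (n := n)]
    exact diagLevel_strictMono_right hm _ (by exact_mod_cast hjn)
  have hxm : x < m := by exact_mod_cast hxm
  refine ⟨x, mk_mem_iSet_of_diagLevel_nonneg hcop hy hym (by omega) hxm hnonneg ?_, ?_,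
    by omega⟩
  · exact hj.trans_le (hy (Set.mem_Iic.mpr hcm) (Set.mem_Iic.mpr hxm.le) hcx)
  · exact Finset.mem_filter.mpr ⟨Finset.mem_Icc.mpr ⟨he, hem⟩, hex, hxe⟩

theorem card_oSetAbove (hm : 0 < m) (hn : 0 < n) (hcop : Nat.Coprime m n)
    (hy : MonotoneOn y (Set.Iic m)) (hy0 : y 0 = 0) (hym : y m = n)
    (habove : ∀ c ≤ m, n * c ≤ m * y c) :
    (oSetAbove m n y).card = ∑ p ∈ iSet m n y,
      {e ∈ eastCrossings m n y (diagLevel m n p.1 p.2) | e ≤ p.1}.card := by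
  choose! x hx using fun q (hq : q ∈ oSetAbove m n y) ↦
    exists_mem_iSet_of_mem_oSetAbove hm hn hcop hy hym habove hq
  rw [← Finset.card_sigma]
  refine Finset.card_nbij (fun q ↦ ⟨(x q, q.2.2), q.1⟩) ?_ ?_ ?_
  · intro q hq
    obtain ⟨hi, he, hle⟩ := hx q hq
    exact Finset.mem_sigma.mpr ⟨hi, Finset.mem_filter.mpr ⟨he, hle⟩⟩
  · rintro ⟨e, s⟩ hq ⟨e', s'⟩ hq' heq
    simp only [Sigma.mk.injEq, Prod.mk.injEq, heq_eq_eq] at heq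
    obtain ⟨⟨-, hrow⟩, rfl⟩ := heq
    have hs := (mk_mem_oSet_iff.mp (Finset.mem_filter.mp hq).1).2.1
    have hs' := (mk_mem_oSet_iff.mp (Finset.mem_filter.mp hq').1).2.1
    rw [northSteps_injOn_snd hy hym hs hs' hrow]
  · rintro ⟨⟨a, b⟩, e⟩ hz
    obtain ⟨hp, he⟩ := Finset.mem_sigma.mp hz
    obtain ⟨he, hle⟩ := Finset.mem_filter.mp he
    obtain ⟨c, hc⟩ := exists_mem_oSetAbove_of_mem_iSet hy hy0 hym hp he hle
    have hxa : (x (e, c, b) : ℤ) = a := (existsUnique_diagLevel_mem_Ico_left hn b _).unique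
      (Finset.mem_filter.mp (hx _ hc).2.1).2 (Finset.mem_filter.mp he).2
    exact ⟨(e, c, b), hc, by simp only [Nat.cast_injective hxa]⟩

end RationalDyckPath

/-- For every `(m,n)`-Dyck path `π`,
`|o(π)| − h₊(π) = Σ_{p ∈ i(π)} (k(p) − 1)`. -/
theorem oSet_card_sub_hplus (m n : ℕ) (hm : 0 < m) (hn : 0 < n)
    (hcop : Nat.Coprime m n) (y : ℕ → ℕ) (hy0 : y 0 = 0)
    (hmono : ∀ c < m, y c ≤ y (c + 1)) (hym : y m = n)
    (habove : ∀ c, 1 ≤ c → c ≤ m → n * c ≤ m * y c) :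
    ((oSet m n y).card : ℤ) - (hplus m n y : ℤ)
      = ∑ p ∈ iSet m n y, ((kNum m n y p : ℤ) - 1) := by
  have hy : MonotoneOn y (Set.Iic m) := by
    refine monotoneOn_of_le_succ Set.ordConnected_Iic fun c _ _ hc ↦ ?_
    exact hmono c (Nat.lt_of_succ_le hc)
  have habove' : ∀ c ≤ m, n * c ≤ m * y c := by
    intro c hc
    rcases c.eq_zero_or_pos with rfl | hpos
    · simp
    · exact habove c hpos hc
  rw [Finset.sum_congr rfl fun p hp ↦ kNum_sub_one hcop hy hy0 hym hp, Finset.sum_add_distrib,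
    ← Nat.cast_sum, ← Nat.cast_sum, ← card_oSetAbove hm hn hcop hy hy0 hym habove',
    ← card_oSetBelow hm hcop hy hym habove', card_oSet_eq_hplus_add hm]
  push_cast
  ring
end

section
/- For every (m,n)-Dyck path π, h₊(π) + Σ_{p ∈ i(π)} k(p) = (m−1)(n−1)/2. -/
/-!
Both terms count pairs consisting of an abscissa `0 < a < m` and a north step `s = (x, j)`: the
line through `(a, b)` parallel to the diagonal meets `s` for a single `b`, which lies under the path
exactly when `j + ⌈n (a - x) / m⌉ < y a`, while the `a`-th east step overlaps `s` exactly when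
`y a ≤ j + ⌈n (a - x) / m⌉` and `j < y a + ⌈n (x + 1 - a) / m⌉`. Hence a pair counts (once) iff
`j < y a + ⌈n (x + 1 - a) / m⌉` for `a ≤ x`, and iff `j + ⌈n (a - x) / m⌉ < y a` for `x < a`.
The number of such `j` in column `x` is a difference of two minima, and these differences telescope
over all `a` and `x` to `∑ a, (n - ⌈n a / m⌉)`, which does not depend on the path.
-/

open Finset

theorem sum_range_sum_Ico_telescope {G : Type*} [AddCommGroup G] (M M' : ℕ → ℕ → G) (m : ℕ) :
    ∑ x ∈ range m, ∑ a ∈ Ico 1 m,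
        (if a ≤ x then M a (x + 1) - M' a x else M' (x + 1) a - M x a) =
      ∑ a ∈ Ico 1 m, (M a m - M 0 a) := by
  obtain _ | k := m
  · simp
  induction k with
  | zero => simp
  | succ k ih =>
    have last_row : ∑ x ∈ range (k + 1),
        (if k + 1 ≤ x then M (k + 1) (x + 1) - M' (k + 1) x else M' (x + 1) (k + 1) - M x (k + 1)) =
          ∑ x ∈ range (k + 1), (M' (x + 1) (k + 1) - M x (k + 1)) :=
      sum_congr rfl fun x hx => if_neg (by simpa using hx)
    have last_column : ∑ a ∈ Ico 1 (k + 2),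
        (if a ≤ k + 1 then M a (k + 2) - M' a (k + 1) else M' (k + 2) a - M (k + 1) a) =
          ∑ a ∈ Ico 1 (k + 2), (M a (k + 2) - M' a (k + 1)) :=
      sum_congr rfl fun a ha => if_pos (Nat.lt_succ_iff.1 (mem_Ico.1 ha).2)
    have shift (f : ℕ → G) : ∑ x ∈ range (k + 1), f (x + 1) = ∑ a ∈ Ico 1 (k + 2), f a := by
      simp [sum_Ico_eq_sum_range, add_comm]
    have split_zero : ∑ x ∈ range (k + 1), M x (k + 1) =
        M 0 (k + 1) + ∑ a ∈ Ico 1 (k + 1), M a (k + 1) := by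
      rw [range_eq_Ico, sum_eq_sum_Ico_succ_bot k.succ_pos]
    rw [sum_range_succ, last_column]
    simp only [sum_Ico_succ_top (Nat.le_add_left 1 k), sum_add_distrib, ih, last_row,
      sum_sub_distrib, shift fun a => M' a (k + 1), split_zero]
    abel

theorem card_filter_Ico_lt {p q : ℕ} (hpq : p ≤ q) (t : ℤ) :
    (#{j ∈ Ico p q | ((j : ℕ) : ℤ) < t} : ℤ) = min (q : ℤ) t - min (p : ℤ) t := by
  have filter_eq : {j ∈ Ico p q | ((j : ℕ) : ℤ) < t} = Ico p (min q t.toNat) := by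
    ext j
    simp only [mem_filter, mem_Ico]
    omega
  rw [filter_eq, Nat.card_Ico]
  omega

/-- `⌈n t / m⌉`, the least integer height weakly above the diagonal at abscissa `t`. Negative `t`
are allowed, so that `-diagCeil m n (-t)` is the corresponding floor. -/
def diagCeil (m n : ℕ) (t : ℤ) : ℤ := ⌈(n * t : ℚ) / m⌉

section diagCeil

variable {m n : ℕ}

theorem diagCeil_le_iff (hm : 0 < m) {t c : ℤ} : diagCeil m n t ≤ c ↔ n * t ≤ m * c := by
  rw [diagCeil, Int.ceil_le, div_le_iff₀' (by exact_mod_cast hm)]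
  norm_cast

theorem lt_diagCeil_iff (hm : 0 < m) {t c : ℤ} : c < diagCeil m n t ↔ m * c < n * t :=
  lt_iff_lt_of_le_iff_le (diagCeil_le_iff hm)

theorem neg_diagCeil_neg_le (t : ℤ) : -diagCeil m n (-t) ≤ diagCeil m n (t + 1) := by
  have ceil_mono : (n * t : ℚ) / m ≤ n * (t + 1 : ℤ) / m := by
    push_cast
    gcongr
    linarith
  simp only [diagCeil, Int.cast_neg, mul_neg, neg_div, Int.ceil_neg, neg_neg]
  exact (Int.floor_le_ceil _).trans (Int.ceil_mono ceil_mono)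

theorem not_dvd_mul_of_abs_lt (hcop : m.Coprime n) {t : ℤ} (ht : t ≠ 0) (htm : |t| < m) :
    ¬ (m : ℤ) ∣ n * t := fun hdvd =>
  ht (Int.eq_zero_of_abs_lt_dvd (hcop.isCoprime.dvd_of_dvd_mul_left hdvd) htm)

theorem diagCeil_eq_iff_of_not_dvd (hm : 0 < m) {t c : ℤ} (ht : ¬ (m : ℤ) ∣ n * t) :
    diagCeil m n t = c ↔ m * (c - 1) < n * t ∧ n * t < m * c := by
  have ne : (n : ℤ) * t ≠ m * c := fun h => ht ⟨c, h⟩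
  rw [← lt_diagCeil_iff hm, ← ne.le_iff_lt, ← diagCeil_le_iff hm]
  omega

theorem diagCeil_add_diagCeil_sub (hm : 0 < m) {t : ℤ} (ht : ¬ (m : ℤ) ∣ n * t) :
    diagCeil m n t + diagCeil m n (m - t) = n + 1 := by
  have ht' : ¬ (m : ℤ) ∣ n * (m - t) := by
    rwa [mul_sub, dvd_sub_right (dvd_mul_left _ _)]
  obtain ⟨lower, upper⟩ := (diagCeil_eq_iff_of_not_dvd hm ht).1 rfl
  rw [← eq_sub_iff_add_eq', diagCeil_eq_iff_of_not_dvd hm ht']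
  constructor <;> linarith

theorem two_mul_sum_sub_diagCeil (hm : 0 < m) (hcop : m.Coprime n) :
    2 * ∑ a ∈ Ico 1 m, ((n : ℤ) - diagCeil m n a) = (m - 1) * (n - 1) := by
  have reflect := sum_Ico_reflect (fun a : ℕ => (n : ℤ) - diagCeil m n a) 1 m.le_succ
  simp only [Nat.add_sub_cancel, Nat.add_sub_cancel_left] at reflect
  have pair_sum : ∀ a ∈ Ico 1 m,
      ((n : ℤ) - diagCeil m n a) + (n - diagCeil m n (m - a : ℕ)) = n - 1 := by
    intro a ha
    rw [mem_Ico] at ha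
    have := diagCeil_add_diagCeil_sub hm
      (not_dvd_mul_of_abs_lt hcop (t := a) (by omega) (by simpa using ha.2))
    push_cast [ha.2.le]
    omega
  calc 2 * ∑ a ∈ Ico 1 m, ((n : ℤ) - diagCeil m n a)
      = ∑ a ∈ Ico 1 m, (((n : ℤ) - diagCeil m n a) + (n - diagCeil m n (m - a : ℕ))) := by
        rw [sum_add_distrib, reflect, two_mul]
    _ = (m - 1) * (n - 1) := by
        rw [sum_congr rfl pair_sum, sum_const, Nat.card_Ico, nsmul_eq_mul, Nat.cast_pred hm]

end diagCeil

/-- `y` is the sequence of east step heights of an `(m, n)`-Dyck path, extended by `y 0 = 0`. -/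
structure IsDyckPath (m n : ℕ) (y : ℕ → ℕ) : Prop where
  zero : y 0 = 0
  le_succ : ∀ c < m, y c ≤ y (c + 1)
  last : y m = n
  above : ∀ c ≤ m, n * c ≤ m * y c

/-- The line through the lattice point `p` parallel to the diagonal meets the interior of the north
step `s`; this is the condition counted by `kNum`. -/
abbrev Crosses (m n : ℕ) (p s : ℕ × ℕ) : Prop :=
  (m : ℤ) * s.2 < m * p.2 + n * ((s.1 : ℤ) - p.1) ∧
    (m : ℤ) * p.2 + n * ((s.1 : ℤ) - p.1) < m * ((s.2 : ℤ) + 1)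

/-- Some line parallel to the diagonal meets the interiors of the `a`-th east step and of the north
step `s`; this is the condition counted by `hplus`. -/
abbrev Overlaps (m n : ℕ) (y : ℕ → ℕ) (a : ℕ) (s : ℕ × ℕ) : Prop :=
  (m : ℤ) * y a - n * a < m * ((s.2 : ℤ) + 1) - n * s.1 ∧
    (m : ℤ) * s.2 - n * s.1 < m * y a - n * ((a : ℤ) - 1)

/-- The pair of an abscissa `a` and a north step `s` contributes to `h₊(π) + ∑ k(p)`: either the
`a`-th east step precedes and overlaps `s`, or `s` is crossed by the line through some
`(a, b) ∈ i(π)`. It is encoded by the inequality that decides this when `0 < a < m`. -/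
abbrev Contributes (m n : ℕ) (y : ℕ → ℕ) (a : ℕ) (s : ℕ × ℕ) : Prop :=
  if a ≤ s.1 then (s.2 : ℤ) < y a + diagCeil m n (s.1 + 1 - a)
  else s.2 + diagCeil m n (a - s.1) < y a

/-- The height `y b` of the path capped at the least integer height weakly above, at abscissa `t`,
the line through `(a, y a)` parallel to the diagonal. -/
def cappedHeight (m n : ℕ) (y : ℕ → ℕ) (a b t : ℕ) : ℤ :=
  min (y b : ℤ) (y a + diagCeil m n (t - a))

section steps

variable {m n : ℕ} {y : ℕ → ℕ}

theorem overlaps_iff (hm : 0 < m) {a : ℕ} {s : ℕ × ℕ} :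
    Overlaps m n y a s ↔
      y a ≤ s.2 + diagCeil m n (a - s.1) ∧ (s.2 : ℤ) < y a + diagCeil m n (s.1 + 1 - a) := by
  rw [← sub_le_iff_le_add', ← sub_lt_iff_lt_add', ← Int.sub_one_lt_iff, lt_diagCeil_iff hm,
    lt_diagCeil_iff hm]
  constructor <;> rintro ⟨bottom, top⟩ <;> constructor <;> linarith

theorem crosses_iff (hcop : m.Coprime n) {p s : ℕ × ℕ} (hne : p.1 ≠ s.1)
    (hp : p.1 < m) (hs : s.1 < m) :
    Crosses m n p s ↔ (p.2 : ℤ) = s.2 + diagCeil m n (p.1 - s.1) := by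
  have not_dvd : ¬ (m : ℤ) ∣ n * ((p.1 : ℤ) - s.1) :=
    not_dvd_mul_of_abs_lt hcop (by omega) (by rw [abs_lt]; omega)
  rw [← sub_eq_iff_eq_add', eq_comm, diagCeil_eq_iff_of_not_dvd hp.pos not_dvd]
  constructor <;> rintro ⟨bottom, top⟩ <;> constructor <;> linarith

theorem not_crosses_of_fst_eq {p s : ℕ × ℕ} (h : p.1 = s.1) : ¬ Crosses m n p s := by
  rintro ⟨bottom, top⟩
  rw [h, sub_self, mul_zero, add_zero] at bottom top
  have := lt_of_mul_lt_mul_left bottom m.cast_nonneg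
  have := lt_of_mul_lt_mul_left top m.cast_nonneg
  omega

theorem fst_lt_of_mem_northSteps {s : ℕ × ℕ} (hs : s ∈ northSteps m n y) : s.1 < m := by
  simp only [northSteps, mem_filter, mem_product, mem_range] at hs
  exact hs.1.1

theorem hplus_eq_sum_card :
    hplus m n y = ∑ s ∈ northSteps m n y, #{a ∈ Ico 1 m | a ≤ s.1 ∧ Overlaps m n y a s} := by
  rw [hplus, oSet, filter_filter, card_filter, sum_product_right]
  refine sum_congr rfl fun s hs => ?_
  have := fst_lt_of_mem_northSteps hs
  rw [← card_filter]
  congr 1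
  ext a
  simp only [eastSteps, mem_filter, mem_Icc, mem_Ico]
  constructor <;> rintro ⟨range_a, le_fst, overlaps⟩ <;>
    exact ⟨by omega, le_fst, overlaps⟩

theorem sum_kNum_eq_sum_card :
    ∑ p ∈ iSet m n y, kNum m n y p =
      ∑ s ∈ northSteps m n y, #{p ∈ iSet m n y | Crosses m n p s} :=
  sum_card_bipartiteAbove_eq_sum_card_bipartiteBelow (Crosses m n)

end steps

namespace IsDyckPath

variable {m n : ℕ} {y : ℕ → ℕ}

theorem le_height (h : IsDyckPath m n y) {c : ℕ} (hc : c ≤ m) : y c ≤ n := by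
  induction hc using Nat.decreasingInduction with
  | self => exact h.last.le
  | of_succ k hk ih => exact (h.le_succ k hk).trans ih

theorem mem_northSteps (h : IsDyckPath m n y) (s : ℕ × ℕ) :
    s ∈ northSteps m n y ↔ s.1 ∈ range m ∧ s.2 ∈ Ico (y s.1) (y (s.1 + 1)) := by
  simp only [northSteps, mem_filter, mem_product, mem_range, mem_Ico]
  constructor
  · rintro ⟨⟨hx, -⟩, hj⟩
    exact ⟨hx, hj⟩
  · rintro ⟨hx, hj⟩
    exact ⟨⟨hx, hj.2.trans_le (h.le_height hx)⟩, hj⟩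

theorem mul_fst_le_of_mem_northSteps (h : IsDyckPath m n y) {s : ℕ × ℕ}
    (hs : s ∈ northSteps m n y) : n * s.1 ≤ m * s.2 := by
  simp only [h.mem_northSteps, mem_range, mem_Ico] at hs
  exact (h.above s.1 hs.1.le).trans (Nat.mul_le_mul_left m hs.2.1)

theorem mem_iSet_and_crosses_iff (h : IsDyckPath m n y) (hcop : m.Coprime n) {s : ℕ × ℕ}
    (hs : s ∈ northSteps m n y) {p : ℕ × ℕ} :
    p ∈ iSet m n y ∧ Crosses m n p s ↔
      p.1 ∈ Ico 1 m ∧ (p.2 : ℤ) = s.2 + diagCeil m n (p.1 - s.1) ∧ p.2 < y p.1 := by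
  have s_above : (n : ℤ) * s.1 ≤ m * s.2 := mod_cast h.mul_fst_le_of_mem_northSteps hs
  simp only [h.mem_northSteps, mem_range, mem_Ico] at hs
  simp only [iSet, mem_filter, mem_product, mem_Icc, mem_Ico, mem_range]
  rcases eq_or_ne p.1 s.1 with heq | hne
  · refine iff_of_false (fun hp => not_crosses_of_fst_eq heq hp.2) ?_
    rintro ⟨-, hp, under⟩
    simp only [heq, sub_self, diagCeil, Int.cast_zero, mul_zero, zero_div, Int.ceil_zero,
      add_zero, Nat.cast_inj] at hp under
    omega
  · constructor
    · rintro ⟨⟨⟨hp, -⟩, -, under⟩, crosses⟩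
      exact ⟨by omega, (crosses_iff hcop hne (by omega) hs.1).1 crosses, under⟩
    · rintro ⟨hp, hb, under⟩
      have crosses := (crosses_iff hcop hne hp.2 hs.1).2 hb
      have p_above : (n : ℤ) * p.1 < m * p.2 := by linarith [crosses.1]
      exact ⟨⟨⟨by omega, under.trans_le (h.le_height hp.2.le)⟩, mod_cast p_above, under⟩, crosses⟩

theorem add_diagCeil_nonneg (h : IsDyckPath m n y) {s : ℕ × ℕ}
    (hs : s ∈ northSteps m n y) (a : ℕ) : 0 ≤ s.2 + diagCeil m n (a - s.1) := by
  have s_above : (n : ℤ) * s.1 ≤ m * s.2 := mod_cast h.mul_fst_le_of_mem_northSteps hs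
  have hm : 0 < m := (fst_lt_of_mem_northSteps hs).pos
  have : -(s.2 : ℤ) - 1 < diagCeil m n (a - s.1) := by
    rw [lt_diagCeil_iff hm]
    have : (0 : ℤ) ≤ n * a := by positivity
    have : (0 : ℤ) < m := mod_cast hm
    linarith
  omega

theorem card_iSet_crosses (h : IsDyckPath m n y) (hcop : m.Coprime n) {s : ℕ × ℕ}
    (hs : s ∈ northSteps m n y) :
    #{p ∈ iSet m n y | Crosses m n p s} =
      #{a ∈ Ico 1 m | s.2 + diagCeil m n ((a : ℕ) - s.1) < y a} := by
  refine card_nbij' Prod.fst (fun a => (a, (s.2 + diagCeil m n (a - s.1)).toNat)) ?_ ?_ ?_ ?_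
  · intro p hp
    simp only [coe_filter, Set.mem_ofPred_eq, h.mem_iSet_and_crosses_iff hcop hs] at hp ⊢
    exact ⟨hp.1, by omega⟩
  · intro a ha
    have := h.add_diagCeil_nonneg hs a
    simp only [coe_filter, Set.mem_ofPred_eq, h.mem_iSet_and_crosses_iff hcop hs] at ha ⊢
    exact ⟨ha.1, by omega, by omega⟩
  · intro p hp
    simp only [coe_filter, Set.mem_ofPred_eq, h.mem_iSet_and_crosses_iff hcop hs] at hp
    exact Prod.ext rfl (by simp [← hp.2.1])
  · exact fun a _ => rfl

theorem hplus_add_sum_kNum_eq_sum_card_contributes (h : IsDyckPath m n y)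
    (hcop : m.Coprime n) :
    hplus m n y + ∑ p ∈ iSet m n y, kNum m n y p =
      ∑ s ∈ northSteps m n y, #{a ∈ Ico 1 m | Contributes m n y a s} := by
  rw [hplus_eq_sum_card, sum_kNum_eq_sum_card, ← sum_add_distrib]
  refine sum_congr rfl fun s hs => ?_
  have hm : 0 < m := (fst_lt_of_mem_northSteps hs).pos
  rw [h.card_iSet_crosses hcop hs, ← card_union_of_disjoint, ← filter_or]
  · refine congr_arg card (filter_congr fun a _ => ?_)
    have floor_le := neg_diagCeil_neg_le (m := m) (n := n) (s.1 - a)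
    rw [neg_sub, sub_add_eq_add_sub] at floor_le
    rw [overlaps_iff hm, Contributes]
    split_ifs <;> omega
  · refine disjoint_filter.2 fun a _ overlaps => ?_
    exact not_lt.2 ((overlaps_iff hm).1 overlaps.2).1

theorem sum_card_contributes (h : IsDyckPath m n y) :
    ∑ s ∈ northSteps m n y, #{a ∈ Ico 1 m | Contributes m n y a s} =
      ∑ x ∈ range m, ∑ a ∈ Ico 1 m,
        #{j ∈ Ico (y x) (y (x + 1)) | Contributes m n y a (x, j)} := by
  rw [sum_finset_product _ _ (fun x => Ico (y x) (y (x + 1))) h.mem_northSteps]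
  exact sum_congr rfl fun x _ => sum_card_bipartiteAbove_eq_sum_card_bipartiteBelow
    fun j a => Contributes m n y a (x, j)

theorem card_column_contributes (h : IsDyckPath m n y) {x : ℕ} (hx : x < m) (a : ℕ) :
    (#{j ∈ Ico (y x) (y (x + 1)) | Contributes m n y a (x, j)} : ℤ) =
      if a ≤ x then cappedHeight m n y a (x + 1) (x + 1) - cappedHeight m n y a x (x + 1)
      else cappedHeight m n y (x + 1) a (a + 1) - cappedHeight m n y x a a := by
  unfold cappedHeight
  push_cast
  split_ifs with hax
  · simp only [card_filter_Ico_lt (h.le_succ x hx)]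
  · simp only [← lt_sub_iff_add_lt, card_filter_Ico_lt (h.le_succ x hx), add_sub_add_right_eq_sub]
    omega

theorem cappedHeight_last (h : IsDyckPath m n y) {a : ℕ} (ha : a < m) :
    cappedHeight m n y a m m = n := by
  have a_above : (n : ℤ) * a ≤ m * y a := mod_cast h.above a ha.le
  have : (n : ℤ) - y a - 1 < diagCeil m n (m - a) := by
    rw [lt_diagCeil_iff ha.pos]
    have : (0 : ℤ) < m := mod_cast ha.pos
    linarith
  rw [cappedHeight, h.last]
  omega

theorem cappedHeight_zero (h : IsDyckPath m n y) {a : ℕ} (ha : a < m) :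
    cappedHeight m n y 0 a a = diagCeil m n a := by
  have : diagCeil m n a ≤ y a := (diagCeil_le_iff ha.pos).2 (mod_cast h.above a ha.le)
  simpa [cappedHeight, h.zero] using this

theorem hplus_add_sum_kNum_eq_sum_sub_diagCeil (h : IsDyckPath m n y) (hcop : m.Coprime n) :
    ((hplus m n y + ∑ p ∈ iSet m n y, kNum m n y p : ℕ) : ℤ) =
      ∑ a ∈ Ico 1 m, ((n : ℤ) - diagCeil m n a) := by
  rw [h.hplus_add_sum_kNum_eq_sum_card_contributes hcop, h.sum_card_contributes]
  push_cast
  calc ∑ x ∈ range m, ∑ a ∈ Ico 1 m,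
        (#{j ∈ Ico (y x) (y (x + 1)) | Contributes m n y a (x, j)} : ℤ)
      = ∑ x ∈ range m, ∑ a ∈ Ico 1 m,
          if a ≤ x then cappedHeight m n y a (x + 1) (x + 1) - cappedHeight m n y a x (x + 1)
          else cappedHeight m n y (x + 1) a (a + 1) - cappedHeight m n y x a a :=
        sum_congr rfl fun x hx => sum_congr rfl fun a _ =>
          h.card_column_contributes (mem_range.1 hx) a
    _ = ∑ a ∈ Ico 1 m, (cappedHeight m n y a m m - cappedHeight m n y 0 a a) :=
        sum_range_sum_Ico_telescope (fun a b => cappedHeight m n y a b b)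
          (fun a b => cappedHeight m n y a b (b + 1)) m
    _ = ∑ a ∈ Ico 1 m, ((n : ℤ) - diagCeil m n a) :=
        sum_congr rfl fun a ha => by
          rw [h.cappedHeight_last (mem_Ico.1 ha).2, h.cappedHeight_zero (mem_Ico.1 ha).2]

end IsDyckPath

/-- For every `(m,n)`-Dyck path `π`,
`h₊(π) + Σ_{p ∈ i(π)} k(p) = (m−1)(n−1)/2`. -/
theorem hplus_add_sum_kNum (m n : ℕ) (hm : 0 < m) (hn : 0 < n)
    (hcop : Nat.Coprime m n) (y : ℕ → ℕ) (hy0 : y 0 = 0)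
    (hmono : ∀ c < m, y c ≤ y (c + 1)) (hym : y m = n)
    (habove : ∀ c, 1 ≤ c → c ≤ m → n * c ≤ m * y c) :
    hplus m n y + ∑ p ∈ iSet m n y, kNum m n y p = (m - 1) * (n - 1) / 2 := by
  have path : IsDyckPath m n y :=
    { zero := hy0
      le_succ := hmono
      last := hym
      above := fun c hc => c.eq_zero_or_pos.elim (by rintro rfl; simp) (habove c · hc) }
  have twice : 2 * (hplus m n y + ∑ p ∈ iSet m n y, kNum m n y p) = (m - 1) * (n - 1) := by
    zify [Nat.cast_pred hm, Nat.cast_pred hn]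
    have := path.hplus_add_sum_kNum_eq_sum_sub_diagCeil hcop
    push_cast at this
    rw [this, two_mul_sum_sub_diagCeil hm hcop]
  exact Nat.eq_div_of_mul_eq_right two_ne_zero twice
end

section
/- For every (m,n)-Dyck path π and every point p = (a,b) ∈ i(π), the number of north steps of π lying in the region x ≤ a whose interior is intersected by the line through p parallel to the diagonal exceeds by exactly 1 the number of east steps of π lying in the region x ≤ a whose interior is intersected by that line. -/
/-!
Let `p = (a, b)` and let `t c` be `m` times the ordinate over the abscissa `c` of the line through
`p`. To the left of `p` the line avoids all lattice points, so the column of north steps over `c`,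
which rises from `y c` to `y (c + 1)`, contains a crossed step iff `m * y c < t c < m * y (c + 1)`,
and then only one. Let `A`, `B`, `C` be the sets of `c < a` for which the line runs strictly below
the point `(c, y c)`, the point `(c, y (c + 1))`, the point `(c + 1, y (c + 1))`. The columns
crossed form `B \ A`, and the crossed east steps, from `(c, y (c + 1))` to `(c + 1, y (c + 1))`,
correspond to `B \ C`. Finally `C` is `A` shifted by one, and the path starts below the line and
runs above it at abscissa `a`, so `C` has exactly one element more than `A`.
-/

open Finset

theorem card_filter_range_succ_eq_add_one {P : ℕ → Prop} [DecidablePred P] {a : ℕ}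
    (h0 : ¬ P 0) (ha : P a) :
    #{c ∈ range a | P (c + 1)} = #{c ∈ range a | P c} + 1 := by
  have hcount := (Nat.count_succ' P a).symm.trans (Nat.count_succ P a)
  simpa only [Nat.count_eq_card_filter_range, if_neg h0, if_pos ha, add_zero] using hcount

theorem card_upcrossings_eq_card_downcrossings_add_one {R : Type*} [LinearOrder R]
    {y t : ℕ → R} {a : ℕ} (hy : ∀ c < a, y c ≤ y (c + 1)) (ht : ∀ c < a, t c ≤ t (c + 1))
    (hne : ∀ c < a, y c ≠ t c) (h0 : y 0 ≤ t 0) (ha : t a < y a) :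
    #{c ∈ range a | y c < t c ∧ t c < y (c + 1)} =
      #{c ∈ range a | t c < y (c + 1) ∧ y (c + 1) < t (c + 1)} + 1 := by
  let A := {c ∈ range a | t c < y c}
  let B := {c ∈ range a | t c < y (c + 1)}
  let C := {c ∈ range a | t (c + 1) < y (c + 1)}
  have hAB : A ⊆ B := by
    simp only [A, B, subset_iff, mem_filter, mem_range]
    exact fun c ⟨hc, hlt⟩ ↦ ⟨hc, hlt.trans_le (hy c hc)⟩
  have hCB : C ⊆ B := by
    simp only [C, B, subset_iff, mem_filter, mem_range]
    exact fun c ⟨hc, hlt⟩ ↦ ⟨hc, (ht c hc).trans_lt hlt⟩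
  have hne_succ : ∀ c < a, y (c + 1) ≠ t (c + 1) := by
    intro c hc
    obtain hlt | rfl := (Nat.succ_le_of_lt hc).lt_or_eq
    · exact hne _ hlt
    · exact ha.ne'
  have hup : {c ∈ range a | y c < t c ∧ t c < y (c + 1)} = B \ A := by grind
  have hdown : {c ∈ range a | t c < y (c + 1) ∧ y (c + 1) < t (c + 1)} = B \ C := by grind
  have hshift : #C = #A + 1 :=
    card_filter_range_succ_eq_add_one (P := fun c ↦ t c < y c) h0.not_gt ha
  have hcardA : #(B \ A) + #A = #B := card_sdiff_add_card_eq_card hAB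
  have hcardC : #(B \ C) + #C = #B := card_sdiff_add_card_eq_card hCB
  rw [hup, hdown]
  omega

theorem mul_lt_and_lt_mul_add_one_iff_ediv_eq {m t j : ℤ} (hm : 0 < m) (ht : ¬ m ∣ t) :
    m * j < t ∧ t < m * (j + 1) ↔ t / m = j := by
  have hne : m * j ≠ t := fun h ↦ ht ⟨j, h.symm⟩
  rw [Int.ediv_eq_iff_of_pos hm, hne.le_iff_lt.symm]
  ring_nf

section Steps

variable {m n a : ℕ} {y : ℕ → ℕ} {t : ℕ → ℤ}

theorem filter_northSteps_le_eq_filter_northSteps_lt (hta : t a ≤ m * y a) :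
    {s ∈ northSteps m n y | s.1 ≤ a ∧ m * s.2 < t s.1 ∧ t s.1 < m * ((s.2 : ℤ) + 1)} =
      {s ∈ northSteps m n y | s.1 < a ∧ m * s.2 < t s.1 ∧ t s.1 < m * ((s.2 : ℤ) + 1)} := by
  refine filter_congr fun s hs ↦ and_congr_left fun ⟨hst, _⟩ ↦ ⟨fun hle ↦ ?_, le_of_lt⟩
  refine hle.lt_of_ne fun heq ↦ ?_
  have hys : y a ≤ s.2 := heq ▸ (mem_filter.mp hs).2.1
  have : (m : ℤ) * y a ≤ m * s.2 := by gcongr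
  rw [heq] at hst
  omega

theorem card_filter_northSteps_lt (ham : a ≤ m) (hyn : ∀ c < a, y (c + 1) ≤ n)
    (ht : ∀ c < a, ¬ (m : ℤ) ∣ t c) :
    #{s ∈ northSteps m n y | s.1 < a ∧ m * s.2 < t s.1 ∧ t s.1 < m * ((s.2 : ℤ) + 1)} =
      #{c ∈ range a | m * y c < t c ∧ t c < m * y (c + 1)} := by
  refine card_bij (fun s _ ↦ s.1) ?mapsTo ?injOn ?surjOn
  case mapsTo =>
    simp only [northSteps, mem_filter, mem_range, mem_product]
    rintro ⟨c, j⟩ ⟨⟨-, hyj, hjy⟩, hca, hjt, htj⟩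
    refine ⟨hca, lt_of_le_of_lt ?_ hjt, htj.trans_le ?_⟩
    · gcongr
    · gcongr
      exact_mod_cast hjy
  case injOn =>
    simp only [mem_filter]
    rintro ⟨c, i⟩ ⟨-, hca, hi⟩ ⟨_, j⟩ ⟨-, -, hj⟩ rfl
    have hm : (0 : ℤ) < m := by simp only at hca; omega
    rw [mul_lt_and_lt_mul_add_one_iff_ediv_eq hm (ht c hca)] at hi hj
    exact Prod.ext rfl (by exact_mod_cast hi.symm.trans hj)
  case surjOn =>
    simp only [mem_filter, mem_range]
    rintro c ⟨hca, hyt, hty⟩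
    have hm : (0 : ℤ) < m := by omega
    have hle : y c ≤ t c / m := (Int.le_ediv_iff_mul_le hm).2 (by linarith)
    have hlt : t c / m < y (c + 1) := (Int.ediv_lt_iff_lt_mul hm).2 (by linarith)
    lift t c / m to ℕ using by omega with j hj
    refine ⟨(c, j), ⟨?_, hca, (mul_lt_and_lt_mul_add_one_iff_ediv_eq hm (ht c hca)).2 hj.symm⟩, rfl⟩
    have := hyn c hca
    simp only [northSteps, mem_filter, mem_product, mem_range]
    omega

theorem card_filter_eastSteps_le (ham : a ≤ m) (P : ℕ → Prop) [DecidablePred P] :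
    #{c ∈ eastSteps m | c ≤ a ∧ P c} = #{c ∈ range a | P (c + 1)} := by
  refine (card_nbij' (· + 1) (· - 1) ?_ ?_ ?_ ?_).symm
  all_goals grind [eastSteps, Set.MapsTo, Set.LeftInvOn]

end Steps

section Line

variable {m n : ℕ} {p : ℕ × ℕ}

/-- The line of slope `n / m` through `p`, as the function sending an abscissa `c` to `m` times
the ordinate of the line over `c`; the factor `m` keeps the values integral. -/
def scaledLine (m n : ℕ) (p : ℕ × ℕ) (c : ℕ) : ℤ :=
  (m : ℤ) * p.2 + (n : ℤ) * ((c : ℤ) - p.1)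

theorem monotone_scaledLine (m n : ℕ) (p : ℕ × ℕ) : Monotone (scaledLine m n p) := by
  intro c d hcd
  unfold scaledLine
  gcongr

theorem scaledLine_fst (m n : ℕ) (p : ℕ × ℕ) : scaledLine m n p p.1 = m * p.2 := by
  simp [scaledLine]

theorem scaledLine_lt_mul_iff {c : ℕ} {j : ℤ} :
    scaledLine m n p c < m * j ↔ (n : ℤ) * c < n * p.1 + m * (j - p.2) := by
  unfold scaledLine
  constructor <;> intro h <;> linarith

theorem mul_lt_scaledLine_iff {c : ℕ} {j : ℤ} :
    m * j < scaledLine m n p c ↔ (n : ℤ) * p.1 + m * (j - p.2) < n * c := by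
  unfold scaledLine
  constructor <;> intro h <;> linarith

theorem scaledLine_zero_nonneg (hp : n * p.1 ≤ m * p.2) : 0 ≤ scaledLine m n p 0 := by
  zify at hp
  simpa [scaledLine] using hp

theorem not_dvd_scaledLine_of_coprime (hcop : Nat.Coprime m n) (ham : p.1 < m) {c : ℕ}
    (hc : c < p.1) : ¬ (m : ℤ) ∣ scaledLine m n p c := by
  intro hdvd
  have hmul : (m : ℤ) ∣ n * ((c : ℤ) - p.1) := (dvd_add_right (dvd_mul_right _ _)).1 hdvd
  have hsub : (m : ℤ) ∣ (c : ℤ) - p.1 :=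
    (Nat.isCoprime_iff_coprime.mpr hcop).dvd_of_dvd_mul_left hmul
  have hle : (m : ℤ) ≤ p.1 - c := Int.le_of_dvd (by omega) (dvd_sub_comm.1 hsub)
  omega

end Line

/-- Here `y` encodes a lattice path from `(0,0)` to `(m,n)` that ends with `n - y m` north steps and
may cross the diagonal. -/
theorem northCount_restricted_eq_eastCount_restricted_add_one_general
    (m n : ℕ) (y : ℕ → ℕ) (hy0 : y 0 = 0)
    (hmono : ∀ c < m, y c ≤ y (c + 1)) (hym : y m ≤ n)
    (p : ℕ × ℕ) (hp : p ∈ iSet m n y)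
    (hline : ∀ c < p.1, ¬ (m : ℤ) ∣ scaledLine m n p c) :
    ((northSteps m n y).filter fun s => s.1 ≤ p.1 ∧
        ((m : ℤ) * s.2 < (m : ℤ) * p.2 + (n : ℤ) * ((s.1 : ℤ) - (p.1 : ℤ)) ∧
         (m : ℤ) * p.2 + (n : ℤ) * ((s.1 : ℤ) - (p.1 : ℤ)) < (m : ℤ) * ((s.2 : ℤ) + 1))).card
      = ((eastSteps m).filter fun c => c ≤ p.1 ∧
        ((n : ℤ) * ((c : ℤ) - 1) < (n : ℤ) * p.1 + (m : ℤ) * ((y c : ℤ) - (p.2 : ℤ)) ∧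
         (n : ℤ) * p.1 + (m : ℤ) * ((y c : ℤ) - (p.2 : ℤ)) < (n : ℤ) * (c : ℤ))).card
        + 1 := by
  simp only [iSet, mem_filter, mem_product, mem_Icc, mem_range] at hp
  obtain ⟨⟨⟨_, _⟩, _⟩, hdiag, hpath⟩ := hp
  have ham : p.1 < m := by omega
  have hm : (0 : ℤ) < m := by omega
  have hmonoOn : MonotoneOn y (Set.Iic m) :=
    monotoneOn_of_le_add_one Set.ordConnected_Iic fun c _ _ hc ↦ hmono c hc
  have hyn : ∀ c < p.1, y (c + 1) ≤ n := fun c hc ↦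
    have hcm : c + 1 ≤ m := by omega
    (hmonoOn hcm Set.self_mem_Iic hcm).trans hym
  have hend : scaledLine m n p p.1 < m * y p.1 := by
    rw [scaledLine_fst]
    gcongr
  calc
    _ = #{s ∈ northSteps m n y | s.1 < p.1 ∧ m * s.2 < scaledLine m n p s.1 ∧
          scaledLine m n p s.1 < m * ((s.2 : ℤ) + 1)} :=
      congrArg card (filter_northSteps_le_eq_filter_northSteps_lt hend.le)
    _ = #{c ∈ range p.1 | m * y c < scaledLine m n p c ∧ scaledLine m n p c < m * y (c + 1)} :=
      card_filter_northSteps_lt ham.le hyn hline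
    _ = #{c ∈ range p.1 | scaledLine m n p c < m * y (c + 1) ∧
          m * y (c + 1) < scaledLine m n p (c + 1)} + 1 :=
      card_upcrossings_eq_card_downcrossings_add_one (y := fun c ↦ (m : ℤ) * y c)
        (fun c hc ↦ by gcongr; exact hmono c (hc.trans ham))
        (fun c _ ↦ monotone_scaledLine m n p c.le_succ)
        (fun c hc h ↦ hline c hc ⟨y c, h.symm⟩)
        (by simpa [hy0] using scaledLine_zero_nonneg hdiag.le) hend
    _ = _ := by
      rw [card_filter_eastSteps_le ham.le]
      simp only [scaledLine_lt_mul_iff, mul_lt_scaledLine_iff, Nat.cast_add_one,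
        add_sub_cancel_right]

/-- For every `(m,n)`-Dyck path `π` and every point `p = (a,b) ∈ i(π)`, the
number of north steps of `π` lying in the region `x ≤ a` (i.e. with abscissa `c ≤ a`)
whose interior is intersected by the line through `p` parallel to the diagonal exceeds by
exactly `1` the number of east steps of `π` lying in the region `x ≤ a` (i.e. east steps
`c` with `c ≤ a`) whose interior is intersected by that line. -/
theorem northCount_restricted_eq_eastCount_restricted_add_one
    (m n : ℕ) (hm : 0 < m) (hn : 0 < n)
    (hcop : Nat.Coprime m n) (y : ℕ → ℕ) (hy0 : y 0 = 0)
    (hmono : ∀ c < m, y c ≤ y (c + 1)) (hym : y m = n)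
    (habove : ∀ c, 1 ≤ c → c ≤ m → n * c ≤ m * y c)
    (p : ℕ × ℕ) (hp : p ∈ iSet m n y) :
    ((northSteps m n y).filter fun s => s.1 ≤ p.1 ∧
        ((m : ℤ) * s.2 < (m : ℤ) * p.2 + (n : ℤ) * ((s.1 : ℤ) - (p.1 : ℤ)) ∧
         (m : ℤ) * p.2 + (n : ℤ) * ((s.1 : ℤ) - (p.1 : ℤ)) < (m : ℤ) * ((s.2 : ℤ) + 1))).card
      = ((eastSteps m).filter fun c => c ≤ p.1 ∧
        ((n : ℤ) * ((c : ℤ) - 1) < (n : ℤ) * p.1 + (m : ℤ) * ((y c : ℤ) - (p.2 : ℤ)) ∧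
         (n : ℤ) * p.1 + (m : ℤ) * ((y c : ℤ) - (p.2 : ℤ)) < (n : ℤ) * (c : ℤ))).card
        + 1 := by
  have ham : p.1 < m := by
    simp only [iSet, mem_filter, mem_product, mem_Icc] at hp
    omega
  exact northCount_restricted_eq_eastCount_restricted_add_one_general m n y hy0 hmono hym.le p hp
    fun c hc ↦ not_dvd_scaledLine_of_coprime hcop ham hc
end

section
/- Let n ≥ 2, R = ℚ[x₁, …, xₙ], 1 ≤ i ≤ n−1, σᵢ the ℚ-algebra automorphism of R interchanging xᵢ and xᵢ₊₁, and Bᵢ = R ⊗_{R^{σᵢ}} R. Then there is an isomorphism Bᵢ ⊗_R Bᵢ ≅ Bᵢ ⊕ Bᵢ which is simultaneously left R-linear and right R-linear (an isomorphism of (R,R)-bimodules), where the tensor product Bᵢ ⊗_R Bᵢ is taken with respect to the right R-action on the first factor and the left R-action on the second, and the left (resp. right) R-action on Bᵢ = R ⊗_{R^{σᵢ}} R is multiplication in the first (resp. second) tensor factor. -/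
open MvPolynomial TensorProduct

/-- `R = ℚ[x₀, …, x_{n-1}]`. -/
abbrev PolyQ (n : ℕ) := MvPolynomial (Fin n) ℚ

/-- The `ℚ`-algebra automorphism of `R` interchanging the adjacent variables `xᵢ` and
`xᵢ₊₁` and fixing the other variables. -/
noncomputable def adjSwap (n i : ℕ) (hi : i + 1 < n) : PolyQ n ≃ₐ[ℚ] PolyQ n :=
  renameEquiv ℚ (Equiv.swap ⟨i, Nat.lt_of_succ_lt hi⟩ ⟨i + 1, hi⟩)

/-- The subalgebra `R^{σᵢ}` of polynomials invariant under the transposition of the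
variables `xᵢ` and `xᵢ₊₁`. -/
noncomputable def invariants (n i : ℕ) (hi : i + 1 < n) : Subalgebra ℚ (PolyQ n) :=
  AlgHom.equalizer (adjSwap n i hi).toAlgHom (AlgHom.id ℚ (PolyQ n))

/-- The Bott–Samelson bimodule `Bᵢ = R ⊗_{R^{σᵢ}} R`.  Its left `R`-action is
multiplication in the first tensor factor (via `includeLeft`), and its right `R`-action
is multiplication in the second tensor factor (via `includeRight`). -/
noncomputable abbrev BS (n i : ℕ) (hi : i + 1 < n) :=
  PolyQ n ⊗[invariants n i hi] PolyQ n

/-- Left inclusion `R → Bᵢ` (the left `R`-action on `Bᵢ` is multiplication by its image). -/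
noncomputable def incL (n i : ℕ) (hi : i + 1 < n) :
    PolyQ n →ₐ[invariants n i hi] BS n i hi :=
  Algebra.TensorProduct.includeLeft

/-- Right inclusion `R → Bᵢ` (the right `R`-action on `Bᵢ` is multiplication by its
image). -/
noncomputable def incR (n i : ℕ) (hi : i + 1 < n) :
    PolyQ n →ₐ[invariants n i hi] BS n i hi :=
  Algebra.TensorProduct.includeRight

/-- The `R`-module structure on `Bᵢ` given by the *right* `R`-action, i.e. multiplication
in the second tensor factor. -/
noncomputable def rightMod (n i : ℕ) (hi : i + 1 < n) : Module (PolyQ n) (BS n i hi) :=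
  Module.compHom (BS n i hi) (incR n i hi).toRingHom

/-- The tensor product `Bᵢ ⊗_R Bᵢ`, taken with respect to the right `R`-action on the
first factor and the left `R`-action on the second factor. -/
noncomputable abbrev BSTensorBS (n i : ℕ) (hi : i + 1 < n) :=
  @TensorProduct (PolyQ n) _ (BS n i hi) (BS n i hi) _ _ (rightMod n i hi) _

/-- The pure tensor `x ⊗ y` in `Bᵢ ⊗_R Bᵢ` (right `R`-action on the first factor, left
`R`-action on the second factor). -/
noncomputable def bsTmul (n i : ℕ) (hi : i + 1 < n) (x y : BS n i hi) :
    BSTensorBS n i hi :=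
  @TensorProduct.tmul (PolyQ n) _ (BS n i hi) (BS n i hi) _ _ (rightMod n i hi) _ x y

/-!
Write `P` for the polynomial ring, `S` for the invariants of `σᵢ`, and `x = xᵢ`. The Demazure
operator `∂ f = (f - σᵢ f) / (x - σᵢ x)` takes values in `S`, and so does `f - ∂ f * x`; hence `P`
is free over `S` with basis `1, x`. Substituting this basis for the middle factor of
`(P ⊗_S P) ⊗_P (P ⊗_S P) ≃ P ⊗_S P ⊗_S P` splits it into two copies of `P ⊗_S P`, compatibly with
the actions of `P` on the outer factors.
-/

section FixedSubalgebra

variable {k A : Type*} [CommRing k] [CommRing A] [Algebra k A]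

/-- The subalgebra of elements fixed by an algebra endomorphism. It is an equalizer so that it
unfolds to `invariants` when `σ` is an adjacent transposition of variables. -/
abbrev fixedSubalgebra (σ : A →ₐ[k] A) : Subalgebra k A :=
  AlgHom.equalizer σ (AlgHom.id k A)

variable {σ : A →ₐ[k] A} {x : A}

lemma linearIndependent_one_self (hx : x - σ x ∈ nonZeroDivisors A) :
    LinearIndependent (fixedSubalgebra σ) ![1, x] := by
  rw [LinearIndependent.pair_iff]
  rintro ⟨s, hs : σ s = s⟩ ⟨t, ht : σ t = t⟩ hst
  have hst : s + t * x = 0 := by simpa [Algebra.smul_def] using hst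
  have hσ : s + t * σ x = 0 := by simpa [hs, ht] using congrArg σ hst
  have ht0 : t = 0 := mem_nonZeroDivisors_iff_right.mp hx t (by linear_combination hst - hσ)
  have hs0 : s = 0 := by simpa [ht0] using hst
  exact ⟨Subtype.ext hs0, Subtype.ext ht0⟩

lemma map_eq_self_of_sub_map_eq_mul (hσ : Function.Involutive σ)
    (hx : x - σ x ∈ nonZeroDivisors A) {f g : A} (hfg : f - σ f = (x - σ x) * g) : σ g = g := by
  have h : σ f - f = (σ x - x) * σ g := by simpa [hσ f, hσ x] using congrArg σ hfg
  exact (mul_cancel_left_mem_nonZeroDivisors hx).mp (by linear_combination hfg + h)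

lemma top_le_span_one_self (hσ : Function.Involutive σ) (hx : x - σ x ∈ nonZeroDivisors A)
    (hdvd : ∀ f, x - σ x ∣ f - σ f) :
    ⊤ ≤ Submodule.span (fixedSubalgebra σ) (Set.range ![1, x]) := by
  rintro f -
  obtain ⟨g, hfg⟩ := hdvd f
  have hg : σ g = g := map_eq_self_of_sub_map_eq_mul hσ hx hfg
  have hf : σ (f - g * x) = f - g * x := by
    rw [map_sub, map_mul, hg]
    linear_combination -hfg
  rw [Matrix.range_cons_cons_empty, Submodule.mem_span_pair]
  exact ⟨⟨f - g * x, hf⟩, ⟨g, hg⟩, by simp [Algebra.smul_def]⟩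

/-- The basis `1, x` of an algebra over the fixed subalgebra of an involution `σ`, for `x` such
that the Demazure operator `f ↦ (f - σ f) / (x - σ x)` is well defined. -/
noncomputable def basisOneSelf (hσ : Function.Involutive σ) (hx : x - σ x ∈ nonZeroDivisors A)
    (hdvd : ∀ f, x - σ x ∣ f - σ f) : Module.Basis (Fin 2) (fixedSubalgebra σ) A :=
  .mk (linearIndependent_one_self hx) (top_le_span_one_self hσ hx hdvd)

end FixedSubalgebra

section SwapVars

variable (k : Type*) {ι : Type*} [CommRing k]

lemma X_sub_X_mem_nonZeroDivisors {i j : ι} (hij : i ≠ j) :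
    (X i - X j : MvPolynomial ι k) ∈ nonZeroDivisors (MvPolynomial ι k) := by
  classical
  -- The automorphism `X i ↦ X i + X j` carries `X i - X j` to `X i`.
  let φ : MvPolynomial ι k →ₐ[k] MvPolynomial ι k := aeval (Function.update X i (X i + X j))
  let ψ : MvPolynomial ι k →ₐ[k] MvPolynomial ι k := aeval (Function.update X i (X i - X j))
  have hψφ : ψ.comp φ = AlgHom.id k _ := by
    ext1 l
    rcases eq_or_ne l i with rfl | hl
    · simp [φ, ψ, hij.symm]
    · simp [φ, ψ, hl]
  have hφ_inj : Function.Injective φ :=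
    Function.LeftInverse.injective (g := ψ) (DFunLike.congr_fun hψφ)
  have hφ : φ (X i - X j) = X i := by simp [φ, hij.symm]
  refine mem_nonZeroDivisors_of_injective hφ_inj ?_
  rw [hφ]
  exact isRegular_X.mem_nonZeroDivisors

variable [DecidableEq ι] (i j : ι)

/-- The algebra endomorphism of `k[X]` interchanging the variables `X i` and `X j`. -/
noncomputable abbrev swapVars : MvPolynomial ι k →ₐ[k] MvPolynomial ι k :=
  (renameEquiv k (Equiv.swap i j)).toAlgHom

lemma swapVars_involutive : Function.Involutive (swapVars k i j) := fun f ↦ by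
  simp [rename_rename, ← Equiv.coe_trans]

lemma X_sub_X_dvd_sub_swapVars (f : MvPolynomial ι k) : X i - X j ∣ f - swapVars k i j f := by
  rw [← Ideal.mem_span_singleton, ← Ideal.Quotient.mk_eq_mk_iff_sub_mem]
  set I : Ideal (MvPolynomial ι k) := Ideal.span {X i - X j}
  have hX : Ideal.Quotient.mk I (X i) = Ideal.Quotient.mk I (X j) :=
    (Ideal.Quotient.mk_eq_mk_iff_sub_mem _ _).mpr (Ideal.mem_span_singleton_self _)
  suffices Ideal.Quotient.mkₐ k I = (Ideal.Quotient.mkₐ k I).comp (swapVars k i j) from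
    DFunLike.congr_fun this f
  ext1 l
  rcases eq_or_ne l i with rfl | hi
  · simp [hX]
  rcases eq_or_ne l j with rfl | hj
  · simp [hX]
  · simp [Equiv.swap_apply_of_ne_of_ne hi hj]

variable {i j}

/-- The basis `1, X i` of the polynomial ring over the polynomials invariant under
`X i ↔ X j`. -/
noncomputable def swapVarsBasis (hij : i ≠ j) :
    Module.Basis (Fin 2) (fixedSubalgebra (swapVars k i j)) (MvPolynomial ι k) :=
  have hX : X i - swapVars k i j (X i) = X i - X j := by simp
  basisOneSelf (x := X i) (swapVars_involutive k i j)
    (hX ▸ X_sub_X_mem_nonZeroDivisors k hij) (hX ▸ X_sub_X_dvd_sub_swapVars k i j)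

end SwapVars

section BimodTensor

attribute [local instance] Algebra.TensorProduct.rightAlgebra

variable (S A R C : Type*) [CommSemiring S] [CommSemiring A] [CommSemiring R] [CommSemiring C]
  [Algebra S A] [Algebra S R] [Algebra S C]

/-- The tensor product over `R` of the `(A, R)`-bimodule `A ⊗[S] R` and the `(R, C)`-bimodule
`R ⊗[S] C`. Keeping `A`, `R` and `C` apart lets instance search choose the right action of `R` on
the first factor and the left action on the second, which for `A = R = C` are both module
structures on `R ⊗[S] R`. -/
abbrev BimodTensor : Type _ := (A ⊗[S] R) ⊗[R] (R ⊗[S] C)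

variable {S A R C}

/-- The pure tensor of `x` and `y` in `BimodTensor S A R C`; applied with `A = R = C` it avoids the
instance ambiguity of `⊗ₜ[R]`. -/
abbrev bimodTmul (x : A ⊗[S] R) (y : R ⊗[S] C) : BimodTensor S A R C := x ⊗ₜ[R] y

variable {κ : Type*} [DecidableEq κ] (b : Module.Basis κ S R)

/-- An `S`-basis of `R` decomposes `(A ⊗[S] R) ⊗[R] (R ⊗[S] C) ≃ A ⊗[S] R ⊗[S] C` into copies of
`A ⊗[S] C`. -/
noncomputable def bimodTensorEquivFinsupp : BimodTensor S A R C ≃+ (κ →₀ A ⊗[S] C) :=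
  (AlgebraTensorModule.cancelBaseChange S R R (A ⊗[S] R) C).toAddEquiv.trans <|
    LinearEquiv.toAddEquiv <|
      TensorProduct.assoc S A R C ≪≫ₗ
        (TensorProduct.equivFinsuppOfBasisLeft b).lTensor A ≪≫ₗ finsuppRight S S A C κ

lemma bimodTensorEquivFinsupp_tmul_tmul (a : A) (r r' : R) (c : C) (l : κ) :
    bimodTensorEquivFinsupp b (bimodTmul (a ⊗ₜ r) (r' ⊗ₜ c)) l =
      a ⊗ₜ (b.repr (r' * r) l • c) := by
  have smul_right : r' • (a ⊗ₜ[S] r) = a ⊗ₜ (r' * r) := by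
    simp [Algebra.smul_def, Algebra.TensorProduct.right_algebraMap_apply]
  simp [bimodTensorEquivFinsupp, smul_right]

lemma bimodTensorEquivFinsupp_mul_mul (a : A) (c : C) (x : A ⊗[S] R) (y : R ⊗[S] C) (l : κ) :
    bimodTensorEquivFinsupp b (bimodTmul ((a ⊗ₜ 1) * x) (y * (1 ⊗ₜ c))) l =
      (a ⊗ₜ c) * bimodTensorEquivFinsupp b (bimodTmul x y) l := by
  induction x with
  | zero => simp
  | add x₁ x₂ h₁ h₂ => simp only [mul_add, add_tmul, map_add, Finsupp.add_apply, h₁, h₂]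
  | tmul a' r =>
    induction y with
    | zero => simp
    | add y₁ y₂ h₁ h₂ =>
      simp only [add_mul, mul_add, tmul_add, map_add, Finsupp.add_apply, h₁, h₂]
    | tmul r' c' => simp [bimodTensorEquivFinsupp_tmul_tmul, mul_comm c']

/-- The decomposition `bimodTensorEquivFinsupp` for `R` free of rank two over `S`. -/
noncomputable def bimodTensorEquivProd (b : Module.Basis (Fin 2) S R) :
    BimodTensor S A R C ≃+ A ⊗[S] C × A ⊗[S] C :=
  (bimodTensorEquivFinsupp b).trans
    (Finsupp.linearEquivFunOnFinite S _ (Fin 2) ≪≫ₗ LinearEquiv.finTwoArrow S _).toAddEquiv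

lemma bimodTensorEquivProd_mul_mul (b : Module.Basis (Fin 2) S R) (a : A) (c : C)
    (x : A ⊗[S] R) (y : R ⊗[S] C) :
    bimodTensorEquivProd b (bimodTmul ((a ⊗ₜ 1) * x) (y * (1 ⊗ₜ c))) =
      (a ⊗ₜ c, a ⊗ₜ c) * bimodTensorEquivProd b (bimodTmul x y) :=
  Prod.ext (bimodTensorEquivFinsupp_mul_mul b a c x y 0)
    (bimodTensorEquivFinsupp_mul_mul b a c x y 1)

lemma bimodTensorEquivProd_mul_left (b : Module.Basis (Fin 2) S R) (a : A)
    (x : A ⊗[S] R) (y : R ⊗[S] C) :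
    bimodTensorEquivProd b (bimodTmul ((a ⊗ₜ 1) * x) y) =
      (a ⊗ₜ 1, a ⊗ₜ 1) * bimodTensorEquivProd b (bimodTmul x y) := by
  simpa only [← Algebra.TensorProduct.one_def, mul_one] using
    bimodTensorEquivProd_mul_mul b a 1 x y

lemma bimodTensorEquivProd_mul_right (b : Module.Basis (Fin 2) S R) (c : C)
    (x : A ⊗[S] R) (y : R ⊗[S] C) :
    bimodTensorEquivProd b (bimodTmul x (y * (1 ⊗ₜ c))) =
      bimodTensorEquivProd b (bimodTmul x y) * (1 ⊗ₜ c, 1 ⊗ₜ c) := by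
  rw [mul_comm (bimodTensorEquivProd b _)]
  simpa only [← Algebra.TensorProduct.one_def, one_mul] using
    bimodTensorEquivProd_mul_mul b 1 c x y

end BimodTensor

/-- The Bott–Samelson bimodule of the transposition `X i ↔ X j`, over any coefficient ring and in
any set of variables; `BS` is the case of `ℚ` and adjacent variables. -/
abbrev BottSamelson (k : Type*) {ι : Type*} [CommRing k] [DecidableEq ι] (i j : ι) : Type _ :=
  MvPolynomial ι k ⊗[fixedSubalgebra (swapVars k i j)] MvPolynomial ι k

theorem bott_samelson_tensor_square_general (k : Type*) {ι : Type*} [CommRing k] [DecidableEq ι]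
    {i j : ι} (hij : i ≠ j) :
    ∃ e : BimodTensor (fixedSubalgebra (swapVars k i j))
          (MvPolynomial ι k) (MvPolynomial ι k) (MvPolynomial ι k) ≃+
        BottSamelson k i j × BottSamelson k i j,
      (∀ (r : MvPolynomial ι k) (x y : BottSamelson k i j),
          e (bimodTmul ((r ⊗ₜ 1) * x) y)
            = ((r ⊗ₜ 1) * (e (bimodTmul x y)).1, (r ⊗ₜ 1) * (e (bimodTmul x y)).2)) ∧
      (∀ (r : MvPolynomial ι k) (x y : BottSamelson k i j),
          e (bimodTmul x (y * (1 ⊗ₜ r)))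
            = ((e (bimodTmul x y)).1 * (1 ⊗ₜ r), (e (bimodTmul x y)).2 * (1 ⊗ₜ r))) :=
  ⟨bimodTensorEquivProd (swapVarsBasis k hij),
    bimodTensorEquivProd_mul_left (swapVarsBasis k hij),
    bimodTensorEquivProd_mul_right (swapVarsBasis k hij)⟩

/-- There is an isomorphism `Bᵢ ⊗_R Bᵢ ≅ Bᵢ ⊕ Bᵢ` which is simultaneously
left `R`-linear and right `R`-linear (an isomorphism of `(R,R)`-bimodules), where the
tensor product is taken with respect to the right `R`-action on the first factor and the
left `R`-action on the second, and the left (resp. right) `R`-action on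
`Bᵢ = R ⊗_{R^{σᵢ}} R` is multiplication in the first (resp. second) tensor factor,
componentwise on the direct sum. -/
theorem bott_samelson_tensor_square (n : ℕ) (hn : 2 ≤ n) (i : ℕ) (hi : i + 1 < n) :
    ∃ e : BSTensorBS n i hi ≃+ BS n i hi × BS n i hi,
      (∀ (r : PolyQ n) (x y : BS n i hi),
          e (bsTmul n i hi (incL n i hi r * x) y)
            = (incL n i hi r * (e (bsTmul n i hi x y)).1,
               incL n i hi r * (e (bsTmul n i hi x y)).2)) ∧
      (∀ (r : PolyQ n) (x y : BS n i hi),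
          e (bsTmul n i hi x (y * incR n i hi r))
            = ((e (bsTmul n i hi x y)).1 * incR n i hi r,
               (e (bsTmul n i hi x y)).2 * incR n i hi r)) :=
  -- `rightMod` unfolds to the module structure of `Algebra.TensorProduct.rightAlgebra`.
  bott_samelson_tensor_square_general ℚ (by simp)
end
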